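/- arXiv:1107.3672 — 2 statements merged into one kernel-verified Lean document; each statement's English description precedes it below -/
import Mathlib

section
/- Let r, s be integers with 2 ≤ r−1 ≤ s ≤ 2r−4, let S ⊂ P^r be an irreducible, reduced, nondegenerate projective surface of degree s, sectional genus π and arithmetic genus p_a(S), and let C ⊂ S be an irreducible, reduced, nondegenerate projective curve of degree d ≥ s⁴/(2(r−2)) and arithmetic genus p_a(C). Then p_a(C) ≤ G*(r,d,s,π,p_a(S)). -/
/-!
The proof works in the function field `F` of the surface. Division by a power of a linear form `l₀`
turns the forms of degree `i` into a subspace `U i` of `F` and the forms in the ideal of the curve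
into a subspace `V i ≤ U i`; their dimensions are given by the two Hilbert polynomials.

*Restriction to a hyperplane section.* Let `z₁ = l₁ / l₀` and `K = ℂ(z₁)`. For a saturated
filtration the first difference of the dimensions over `ℂ` is the dimension over `K` of the
`K`-span. The spans model sections of sheaves on the generic member of the pencil spanned by `l₀`
and `l₁`, a curve of degree `s` and arithmetic genus `π` over `K`. For a suitable `l₁` the field `K`
is algebraically closed in `F`, which replaces Bertini's theorem.

*Clifford's inequality.* On such a curve a special space of sections of a rank one sheaf multiplies
the dual of the sheaf, defined by a residue pairing, into the dualizing sheaf. Duality and Hopf's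
lemma on products of subspaces bound its dimension. Applied to the hyperplane series this shows
`2π + 2 ≤ s` when `s ≤ 2r - 4`.

*The count.* Write `d - 1 = ms + ε`. The saturated twist `V (i + N) / U N` of the ideal of the curve
vanishes for `i = m` by Bezout; for `i = m + 1` its dimension is bounded by Clifford's inequality,
and for larger `i` its restriction to the curve is nonspecial because `2π + 2 ≤ s`. Summing the
dimensions and comparing with the Hilbert polynomials bounds the genus.
-/

open scoped BigOperators

noncomputable section

/-- The homogeneous coordinate ring of `ℙ^{n-1}` over `ℂ`: polynomials in `n` variables. -/
abbrev MPoly (n : ℕ) : Type := MvPolynomial (Fin n) ℂ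

/-- An ideal is homogeneous if it contains all homogeneous components of its members. -/
def IsHomogIdeal {n : ℕ} (I : Ideal (MPoly n)) : Prop :=
  ∀ f ∈ I, ∀ k : ℕ, MvPolynomial.homogeneousComponent k f ∈ I

/-- The degree-`k` graded piece of the homogeneous coordinate ring of the subscheme `V(I)`. -/
def degQ {n : ℕ} (I : Ideal (MPoly n)) (k : ℕ) : Submodule ℂ (MPoly n ⧸ I) :=
  (MvPolynomial.homogeneousSubmodule (Fin n) ℂ k).map (Ideal.Quotient.mkₐ ℂ I).toLinearMap

/-- The graded pieces, indexed by `ℤ` (zero in negative degrees). -/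
def degQZ {n : ℕ} (I : Ideal (MPoly n)) (t : ℤ) : Submodule ℂ (MPoly n ⧸ I) :=
  if 0 ≤ t then degQ I t.toNat else ⊥

/-- The Hilbert function of the closed subscheme `V(I) ⊆ ℙ^{n-1}`. -/
def hilbNat {n : ℕ} (I : Ideal (MPoly n)) (t : ℤ) : ℕ :=
  Module.finrank ℂ (degQZ I t)

/-- The Hilbert function, as an integer-valued function. -/
def hilbZ {n : ℕ} (I : Ideal (MPoly n)) (t : ℤ) : ℤ := (hilbNat I t : ℤ)

/-- The irrelevant maximal ideal `(x_0, …, x_{n-1})`. -/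
def mId (n : ℕ) : Ideal (MPoly n) := Ideal.span (Set.range MvPolynomial.X)

/-- The space of degree-`t` graded module homomorphisms `m^k → R/I`. -/
def gradedHomSub {n : ℕ} (I : Ideal (MPoly n)) (k : ℕ) (t : ℤ) :
    Submodule ℂ ((mId n ^ k : Ideal (MPoly n)) →ₗ[MPoly n] (MPoly n ⧸ I)) where
  carrier := {φ | ∀ (j : ℕ) (f : MPoly n) (hf : f ∈ mId n ^ k),
    f ∈ MvPolynomial.homogeneousSubmodule (Fin n) ℂ j → φ ⟨f, hf⟩ ∈ degQZ I ((j : ℤ) + t)}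
  add_mem' := by
    intro a b ha hb j f hf hj
    simpa using Submodule.add_mem _ (ha j f hf hj) (hb j f hf hj)
  zero_mem' := by
    intro j f hf hj
    simpa using Submodule.zero_mem _
  smul_mem' := by
    intro c φ hφ j f hf hj
    simpa using Submodule.smul_mem _ c (hφ j f hf hj)

/-- `h⁰(X, 𝒪_X(t))` for `X = V(I)`: the stable value of the dimensions of the graded Hom
modules `Hom(m^k, R/I)_t` (the Deligne formula for twisted global sections). -/
def h0Nat {n : ℕ} (I : Ideal (MPoly n)) (t : ℤ) : ℕ :=
  ⨆ k : ℕ, Module.finrank ℂ (gradedHomSub I k t)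

/-- `h¹(ℙ^{n-1}, 𝓘_X(t)) = h⁰(X, 𝒪_X(t)) − h_X(t)` (valid for the saturated ideal of `X`). -/
def h1INat {n : ℕ} (I : Ideal (MPoly n)) (t : ℤ) : ℕ := h0Nat I t - hilbNat I t

/-- The dimension over `ℂ` of the Hartshorne–Rao module `M(X) = ⊕_t H¹(ℙ, 𝓘_X(t))`. -/
def raoDim {n : ℕ} (I : Ideal (MPoly n)) : ℕ := ∑ᶠ t : ℤ, h1INat I t

/-- Arithmetically Cohen–Macaulay (for an integral curve): the Hartshorne–Rao module vanishes. -/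
def IsACM {n : ℕ} (I : Ideal (MPoly n)) : Prop := ∀ t : ℤ, h0Nat I t = hilbNat I t

/-- Saturation of an ideal with respect to the irrelevant maximal ideal. -/
def satIdeal {n : ℕ} (I : Ideal (MPoly n)) : Ideal (MPoly n) where
  carrier := {f | ∃ k : ℕ, ∀ j : Fin n, MvPolynomial.X j ^ k * f ∈ I}
  zero_mem' := ⟨0, fun j => by simpa using I.zero_mem⟩
  add_mem' := by
    rintro f g ⟨k, hk⟩ ⟨l, hl⟩
    refine ⟨k + l, fun j => ?_⟩
    have h1 : MvPolynomial.X (R := ℂ) j ^ (k + l) * (f + g)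
        = MvPolynomial.X j ^ l * (MvPolynomial.X j ^ k * f)
          + MvPolynomial.X j ^ k * (MvPolynomial.X j ^ l * g) := by ring
    rw [h1]
    exact I.add_mem (I.mul_mem_left _ (hk j)) (I.mul_mem_left _ (hl j))
  smul_mem' := by
    rintro c f ⟨k, hk⟩
    refine ⟨k, fun j => ?_⟩
    have h1 : MvPolynomial.X (R := ℂ) j ^ k * (c • f) = c * (MvPolynomial.X j ^ k * f) := by
      rw [smul_eq_mul]; ring
    rw [h1]
    exact I.mul_mem_left _ (hk j)

/-- The hyperplane section of `V(I)` by the hyperplane `{ℓ = 0}`, as a closed subscheme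
(its saturated homogeneous ideal). -/
def sect {n : ℕ} (I : Ideal (MPoly n)) (ℓ : MPoly n) : Ideal (MPoly n) :=
  satIdeal (I ⊔ Ideal.span {ℓ})

/-- A property `P` holds for a *general* `k`-tuple of linear forms (hyperplanes): it holds on a
nonempty Zariski-open subset of the space of coefficients. -/
def GenericForms (n k : ℕ) (P : (Fin k → MPoly n) → Prop) : Prop :=
  ∃ Q : MvPolynomial (Fin k × Fin n) ℂ, Q ≠ 0 ∧
    ∀ c : Fin k → Fin n → ℂ, MvPolynomial.eval (fun p => c p.1 p.2) Q ≠ 0 →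
      P fun t => ∑ j : Fin n, MvPolynomial.C (c t j) * MvPolynomial.X j

/-- `V(I) ⊆ ℙ^{n-1}` is nondegenerate: contained in no hyperplane. -/
def Nondeg {n : ℕ} (I : Ideal (MPoly n)) : Prop :=
  ∀ f ∈ MvPolynomial.homogeneousSubmodule (Fin n) ℂ 1, f ∈ I → f = 0

/-- `V(I)` is an integral curve: `I` homogeneous prime, with cone of Krull dimension 2. -/
def IsCurve {n : ℕ} (I : Ideal (MPoly n)) : Prop :=
  IsHomogIdeal I ∧ I.IsPrime ∧ ringKrullDim (MPoly n ⧸ I) = 2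

/-- `V(I)` is an integral surface: `I` homogeneous prime, with cone of Krull dimension 3. -/
def IsSurface {n : ℕ} (I : Ideal (MPoly n)) : Prop :=
  IsHomogIdeal I ∧ I.IsPrime ∧ ringKrullDim (MPoly n ⧸ I) = 3

/-- The curve `V(I)` has degree `d` and arithmetic genus `g`: its Hilbert polynomial is
`d·t + 1 − g`. -/
def CurveInv {n : ℕ} (I : Ideal (MPoly n)) (d g : ℤ) : Prop :=
  ∃ N : ℤ, ∀ t : ℤ, N ≤ t → hilbZ I t = d * t + 1 - g

/-- The surface `V(I)` has degree `s`, sectional genus `π` and arithmetic genus `pa`: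
its Hilbert polynomial is `s·choose(t+1, 2) + (1 − π)·t + 1 + pa`. -/
def SurfInv {n : ℕ} (I : Ideal (MPoly n)) (s π pa : ℤ) : Prop :=
  ∃ N : ℤ, ∀ t : ℤ, N ≤ t → hilbZ I t = s * (t * (t + 1) / 2) + (1 - π) * t + 1 + pa

/-- `V(IC)` is not contained in any integral surface of degree `< s`. -/
def NotInSurfDegLT {n : ℕ} (IC : Ideal (MPoly n)) (s : ℤ) : Prop :=
  ∀ (T : Ideal (MPoly n)) (s' π' pa' : ℤ), IsSurface T → SurfInv T s' π' pa' → s' < s →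
    ¬ T ≤ IC

/-- `V(IC)` is not contained in any integral surface of degree `s` with sectional genus `> π`. -/
def NotInSurfSecGT {n : ℕ} (IC : Ideal (MPoly n)) (s π : ℤ) : Prop :=
  ∀ (T : Ideal (MPoly n)) (π' pa' : ℤ), IsSurface T → SurfInv T s π' pa' → π < π' →
    ¬ T ≤ IC

/-- `V(IC)` is not contained in any integral surface of degree `s` with arithmetic genus `< p`. -/
def NotInSurfGenLT {n : ℕ} (IC : Ideal (MPoly n)) (s p : ℤ) : Prop :=
  ∀ (T : Ideal (MPoly n)) (π' pa' : ℤ), IsSurface T → SurfInv T s π' pa' → pa' < p →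
    ¬ T ≤ IC

/-- `binom2 z = z.choose 2` for integers. -/
def binom2 (z : ℤ) : ℤ := z * (z - 1) / 2

/-- The bound `G*(r,d,s,π,p)` of Di Gennaro–Franco, with `m = (d-1)/s`, `ε = (d-1) % s`. -/
def Gstar (r d s π p : ℤ) : ℤ :=
  binom2 ((d - 1) / s) * s + ((d - 1) / s) * ((d - 1) % s + π) - p
    + max 0 ((2 * π - (s - 1 - (d - 1) % s)) / 2)

/-- The numerical function `h_{r,d,s,π}`. -/
def hF (r d s π : ℤ) (i : ℤ) : ℤ :=
  if 1 ≤ i ∧ i ≤ (d - 1) / s then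
    1 - π + i * s - max 0 ((s - r + 1) - π - i + 1)
  else if i = (d - 1) / s + 1 then
    d - max 0 ((2 * π - (s - 1 - (d - 1) % s)) / 2)
  else if (d - 1) / s + 2 ≤ i then d
  else 0

/-- The threshold `d₀(r)`. -/
def d0 (r : ℤ) : ℤ :=
  if r ≤ 6 then 16 * (r - 2) * (2 * r - 3)
  else if r ≤ 11 then 8 * (r - 2) ^ 3
  else 2 ^ (r.toNat + 1)

end
noncomputable section

/-- The affine cone of `V(I)`: common zeroes of the elements of `I`. -/
def zeroCone {n : ℕ} (I : Ideal (MPoly n)) : Set (Fin n → ℂ) :=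
  {a | ∀ f ∈ I, MvPolynomial.eval a f = 0}

/-- Jacobian-criterion smoothness: at every nonzero point of the affine cone (of dimension `c`)
the gradients of the equations span a subspace of dimension `n - c`. -/
def IsSmooth {n : ℕ} (I : Ideal (MPoly n)) (c : ℕ) : Prop :=
  ∀ a ∈ zeroCone I, a ≠ 0 →
    Module.finrank ℂ (Submodule.span ℂ
      {g : Fin n → ℂ | ∃ f ∈ I, g = fun j => MvPolynomial.eval a (MvPolynomial.pderiv j f)})
      = n - c

/-- Castelnuovo's bound for the genus of a nondegenerate integral curve of degree `d`
in `ℙ^R`. -/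
def castelG (R d : ℤ) : ℤ :=
  binom2 ((d - 1) / (R - 1)) * (R - 1) + ((d - 1) / (R - 1)) * ((d - 1) % (R - 1))

/-- The ideal of the projective cone (from `ℙ^{n-1}` to `ℙ^n`) over `V(I)`. -/
def coneIdeal {n : ℕ} (I : Ideal (MPoly n)) : Ideal (MPoly (n + 1)) :=
  Ideal.map (MvPolynomial.rename (Fin.castSucc : Fin n → Fin (n + 1))) I

/-- `J` is the (saturated homogeneous) ideal of a line in `ℙ^{n-1}`: it is generated by
`n - 2` linearly independent linear forms. -/
def IsLineIdeal {n : ℕ} (J : Ideal (MPoly n)) : Prop :=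
  ∃ V : Submodule ℂ (MPoly n), V ≤ MvPolynomial.homogeneousSubmodule (Fin n) ℂ 1 ∧
    Module.finrank ℂ V = n - 2 ∧ J = Ideal.span (V : Set (MPoly n))

/-- `V(T) ⊆ ℙ^{n-1}` is a smooth rational normal scroll surface: a smooth nondegenerate
integral surface of minimal degree `n - 2` (with sectional and arithmetic genus `0`)
containing a line (which rules out the Veronese surface). -/
def IsSmoothRNScroll {n : ℕ} (T : Ideal (MPoly n)) : Prop :=
  IsSurface T ∧ Nondeg T ∧ IsSmooth T 3 ∧ SurfInv T ((n : ℤ) - 2) 0 0 ∧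
    ∃ J : Ideal (MPoly n), IsLineIdeal J ∧ T ≤ J

/-- The linear projection on points determined by the matrix `L`. -/
def projPt {nb ns : ℕ} (L : Fin ns → Fin nb → ℂ) (a : Fin nb → ℂ) : Fin ns → ℂ :=
  fun t => ∑ j, L t j * a j

/-- The substitution algebra homomorphism determined by the matrix `L` (pullback of the
linear projection `ℙ^{nb-1} ⇢ ℙ^{ns-1}`). -/
def substHom {nb ns : ℕ} (L : Fin ns → Fin nb → ℂ) : MPoly ns →ₐ[ℂ] MPoly nb :=
  MvPolynomial.aeval fun t => ∑ j, MvPolynomial.C (L t j) * MvPolynomial.X j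

/-- The linear projection given by `L` maps `V(I')` isomorphically onto `V(I)`: the center of
projection misses `V(I')`, `V(I)` is the image, and the projection is (projectively) bijective
from `V(I')` onto `V(I)`. -/
def IsIsoProjection {nb ns : ℕ} (L : Fin ns → Fin nb → ℂ)
    (I' : Ideal (MPoly nb)) (I : Ideal (MPoly ns)) : Prop :=
  I = I'.comap (substHom L) ∧
  (∀ a ∈ zeroCone I', a ≠ 0 → projPt L a ≠ 0) ∧
  (∀ a ∈ zeroCone I', ∀ b ∈ zeroCone I', a ≠ 0 → b ≠ 0 →
    (∃ c : ℂ, c ≠ 0 ∧ projPt L a = c • projPt L b) → ∃ c : ℂ, c ≠ 0 ∧ a = c • b) ∧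
  (∀ y ∈ zeroCone I, y ≠ 0 → ∃ a ∈ zeroCone I', a ≠ 0 ∧ ∃ c : ℂ, c ≠ 0 ∧ y = c • projPt L a)

/-- `t` bounds the Castelnuovo–Mumford regularity of the surface `V(I) ⊆ ℙ^{n-1}`:
for every `t' ≥ t`, `H^i(ℙ, 𝓘(t'-i)) = 0` for all `i ≥ 1`, expressed through the standard
inductive characterization by successive general hyperplane sections. -/
def IsRegBound {n : ℕ} (I : Ideal (MPoly n)) (t : ℤ) : Prop :=
  GenericForms n 2 fun L => ∀ t' : ℤ, t ≤ t' →
    h1INat I (t' - 1) = 0 ∧ h1INat (sect I (L 0)) (t' - 1) = 0 ∧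
      h1INat (sect (sect I (L 0)) (L 1)) (t' - 1) = 0

end

namespace GenusBound

open Module Pointwise

/-! ### Products of subspaces of a field -/

section Hopf

variable {K F : Type*} [Field K] [Field F] [Algebra K F] {A B : Submodule K F} {e x : F}

theorem smul_le_iff : e • A ≤ B ↔ ∀ a ∈ A, e * a ∈ B :=
  Submodule.map_le_iff_le_comap

theorem mem_inv_smul_iff (he : e ≠ 0) : x ∈ e⁻¹ • A ↔ e * x ∈ A :=
  Set.mem_inv_smul_set_iff₀ he (A : Set F) x

theorem finrank_smul (he : e ≠ 0) (A : Submodule K F) :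
    finrank K (e • A : Submodule K F) = finrank K A :=
  (Submodule.equivMapOfInjective _ (mul_right_injective₀ he) A).finrank_eq.symm

instance finiteDimensional_smul [FiniteDimensional K A] :
    FiniteDimensional K (e • A : Submodule K F) :=
  Module.Finite.map A _

theorem isIntegral_of_smul_le [FiniteDimensional K A] (hA : A ≠ ⊥) (h : x • A ≤ A) :
    IsIntegral K x :=
  isIntegral_of_smul_mem_submodule A hA ((Submodule.fg_iff_finiteDimensional A).2 inferInstance)
    x (smul_le_iff.1 h)

theorem mem_one_of_smul_le [IsIntegrallyClosedIn K F] [FiniteDimensional K A] (hA : A ≠ ⊥)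
    (h : x • A ≤ A) : x ∈ (1 : Submodule K F) :=
  Submodule.mem_one.2
    (IsIntegrallyClosedIn.algebraMap_eq_of_integral (isIntegral_of_smul_le hA h))

theorem finrank_le_one_of_le_one (h : A ≤ 1) : finrank K A ≤ 1 :=
  calc
    finrank K A ≤ finrank K (K ∙ (1 : F)) :=
      Submodule.finrank_mono (h.trans_eq Submodule.one_eq_span)
    _ = 1 := finrank_span_singleton one_ne_zero

theorem finrank_le_one_of_forall_smul_le [IsIntegrallyClosedIn K F] [FiniteDimensional K A]
    (hA : A ≠ ⊥) {b : F} (hb : b ≠ 0) (h : ∀ y ∈ B, (b⁻¹ * y) • A ≤ A) : finrank K B ≤ 1 := by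
  rw [← finrank_smul (inv_ne_zero hb)]
  exact finrank_le_one_of_le_one (smul_le_iff.2 fun y hy => mem_one_of_smul_le hA (h y hy))

theorem dyson_mul_le (he : e ≠ 0) (A B : Submodule K F) :
    (A ⊔ e • B) * (B ⊓ e⁻¹ • A) ≤ A * B := by
  rw [Submodule.sup_mul]
  refine sup_le (mul_le_mul' le_rfl inf_le_left) (Submodule.mul_le.2 ?_)
  rintro _ ⟨b, hb, rfl⟩ y ⟨-, hy⟩
  have hey : e * y ∈ A := (mem_inv_smul_iff he).1 hy
  convert Submodule.mul_mem_mul hey hb using 1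
  exact (mul_right_comm e b y)

theorem finrank_dyson [FiniteDimensional K A] [FiniteDimensional K B] (he : e ≠ 0) :
    finrank K (A ⊔ e • B : Submodule K F) + finrank K (B ⊓ e⁻¹ • A : Submodule K F) =
      finrank K A + finrank K B := by
  have hinf : e • (B ⊓ e⁻¹ • A) = A ⊓ e • B := by
    ext x
    rw [Submodule.mem_inf, ← inv_inv e, mem_inv_smul_iff (inv_ne_zero he),
      mem_inv_smul_iff (inv_ne_zero he), Submodule.mem_inf, inv_inv, mem_inv_smul_iff he,
      mul_inv_cancel_left₀ he, and_comm]
  rw [← finrank_smul he (B ⊓ e⁻¹ • A), hinf, Submodule.finrank_sup_add_finrank_inf_eq,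
    finrank_smul he]

/-- Hopf's lemma. If `b⁻¹ B` does not stabilize `A`, the linear Dyson transform
`(A + eB, B ∩ e⁻¹A)` with `e ∈ b⁻¹ A` lowers `dim B`, preserves the total dimension, and does not
enlarge the product. -/
theorem finrank_add_finrank_le_finrank_mul_add_one [IsIntegrallyClosedIn K F]
    (A B : Submodule K F) [FiniteDimensional K A] [FiniteDimensional K B]
    (hA : A ≠ ⊥) (hB : B ≠ ⊥) :
    finrank K A + finrank K B ≤ finrank K (A * B : Submodule K F) + 1 := by
  induction hn : finrank K B using Nat.strong_induction_on generalizing A B with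
  | _ n ih =>
    subst hn
    obtain ⟨b, hb, hb0⟩ := B.ne_bot_iff.1 hB
    have : FiniteDimensional K (A * B : Submodule K F) :=
      (Submodule.fg_iff_finiteDimensional _).1 <|
        .mul ((Submodule.fg_iff_finiteDimensional _).2 ‹_›)
          ((Submodule.fg_iff_finiteDimensional _).2 ‹_›)
    by_cases hstab : ∀ y ∈ B, (b⁻¹ * y) • A ≤ A
    · have hbA : b • A ≤ A * B := smul_le_iff.2 fun a ha => by
        rw [mul_comm b a]
        exact Submodule.mul_mem_mul ha hb
      have := Submodule.finrank_mono hbA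
      rw [finrank_smul hb0] at this
      exact add_le_add this (finrank_le_one_of_forall_smul_le hA hb0 hstab)
    · push Not at hstab
      obtain ⟨y, hy, hyA⟩ := hstab
      obtain ⟨a, ha, hya⟩ : ∃ a ∈ A, b⁻¹ * y * a ∉ A := by
        simpa only [smul_le_iff, not_forall, exists_prop] using hyA
      have ha0 : a ≠ 0 := fun h => hya (by rw [h, mul_zero]; exact A.zero_mem)
      have he : a * b⁻¹ ≠ 0 := mul_ne_zero ha0 (inv_ne_zero hb0)
      set B' := B ⊓ (a * b⁻¹)⁻¹ • A
      have hlt : B' < B := lt_of_le_of_ne inf_le_left fun h => hya <| by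
        have hyB' : y ∈ B' := h ▸ hy
        have hya' : a * b⁻¹ * y ∈ A := (mem_inv_smul_iff he).1 hyB'.2
        rwa [show b⁻¹ * y * a = a * b⁻¹ * y by ring]
      have hbB' : b ∈ B' := ⟨hb, (mem_inv_smul_iff he).2 (by rwa [inv_mul_cancel_right₀ hb0])⟩
      have hdim := ih _ (Submodule.finrank_lt_finrank_of_lt hlt) (A ⊔ (a * b⁻¹) • B) B'
        (ne_bot_of_le_ne_bot hA le_sup_left) (B'.ne_bot_iff.2 ⟨b, hbB', hb0⟩) rfl
      have hmul : finrank K ((A ⊔ (a * b⁻¹) • B) * B' : Submodule K F) ≤ _ :=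
        Submodule.finrank_mono (dyson_mul_le he A B)
      rw [finrank_dyson he] at hdim
      omega

end Hopf

/-! ### Filtrations modelling sheaves on a curve -/

section Saturation

variable {K F : Type*} [Field K] [Field F] [Algebra K F] {z : F} {M : ℕ → Submodule K F}

theorem pow_mul_mem (hzM : ∀ k, z • M k ≤ M (k + 1)) (i : ℕ) {k : ℕ} {x : F} (hx : x ∈ M k) :
    z ^ i * x ∈ M (k + i) := by
  induction i with
  | zero => simpa
  | succ i ih =>
    rw [pow_succ', mul_assoc]
    exact smul_le_iff.1 (hzM _) _ ih

variable {N₀ : ℕ} (hM : Monotone M)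
  (hsat : ∀ j, N₀ ≤ j → ∀ f ∈ M (j + 1), z * f ∈ M (j + 1) → f ∈ M j)

include hM hsat in
theorem mem_of_mem_add_of_mul_mem {i j : ℕ} (hj : N₀ ≤ j) {f : F} (hf : f ∈ M (j + i))
    (hzf : z * f ∈ M (j + 1)) : f ∈ M j := by
  induction i with
  | zero => exact hf
  | succ i ih => exact ih (hsat _ (by omega) f hf (hM (by omega) hzf))

include hM hsat in
theorem mem_of_pow_mul_mem (hzM : ∀ k, z • M k ≤ M (k + 1)) {k j : ℕ} (hj : N₀ ≤ j) {f : F}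
    (hf : f ∈ M (j + k)) (hzf : z ^ k * f ∈ M (j + k)) : f ∈ M j := by
  induction k generalizing j f with
  | zero => exact hf
  | succ k ih =>
    rcases Nat.eq_zero_or_pos k with rfl | hk
    · exact hsat j hj f hf (by simpa using hzf)
    rw [pow_succ, mul_assoc] at hzf
    have hzf₂ : z * f ∈ M (j + 2) :=
      ih (by omega) (hM (by omega) (smul_le_iff.1 (hzM _) _ hf)) (hM (by omega) hzf)
    have hzf₁ : z * f ∈ M (j + 1) := ih (by omega) (hM (by omega) hzf₂) (hM (by omega) hzf)
    exact mem_of_mem_add_of_mul_mem hM hsat hj hf hzf₁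

end Saturation

section SheafFiltration

variable {K F : Type*} [Field K] [Field F] [Algebra K F]

/-- A filtration of `K`-subspaces of `F` that, from degree `N₀` on, is generated by its first
step under multiplication by `1` and `z` and has linearly growing dimension `s·k + χ`. It models
the twists `H⁰(L(k))` of a torsion-free rank one sheaf on a curve with a degree `s` polarization,
the pencil being given by the sections `1` and `z`. -/
structure SheafFiltration (z : F) (N₀ : ℕ) (s χ : ℤ) (M : ℕ → Submodule K F) : Prop where
  finiteDimensional : ∀ k, FiniteDimensional K (M k)
  le_succ : ∀ k, M k ≤ M (k + 1)
  smul_le : ∀ k, z • M k ≤ M (k + 1)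
  le_sup_smul : ∀ k, N₀ ≤ k → M (k + 1) ≤ M k ⊔ z • M k
  finrank_eq : ∀ k, N₀ ≤ k → (finrank K (M k) : ℤ) = s * k + χ

/-- A multiplicative filtration of subspaces whose members generate the field `F`, as the
filtration by pole orders along a very ample divisor does. -/
structure RingFiltration (U : ℕ → Submodule K F) : Prop where
  one_mem : (1 : F) ∈ U 0
  mul_le : ∀ i j, U i * U j ≤ U (i + j)
  adjoin_eq_top : IntermediateField.adjoin K (⋃ k, (U k : Set F)) = ⊤

theorem RingFiltration.mul_mem {U : ℕ → Submodule K F} (hU : RingFiltration U) {i j : ℕ}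
    {x y : F} (hx : x ∈ U i) (hy : y ∈ U j) : x * y ∈ U (i + j) :=
  hU.mul_le i j (Submodule.mul_mem_mul hx hy)

namespace SheafFiltration

variable {z : F} {N₀ : ℕ} {s χ : ℤ} {M : ℕ → Submodule K F} (h : SheafFiltration z N₀ s χ M)
include h

theorem monotone : Monotone M :=
  monotone_nat_of_le_succ h.le_succ

theorem smul_eq_inf_smul (hz : z ≠ 0) {j : ℕ} (hj : N₀ ≤ j) :
    z • M j = M (j + 1) ⊓ z • M (j + 1) := by
  have := h.finiteDimensional
  refine Submodule.eq_of_le_of_finrank_eq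
    (le_inf (h.smul_le j) (Submodule.map_mono (h.le_succ j))) ?_
  have hsup : M (j + 1) ⊔ z • M (j + 1) = M (j + 2) :=
    le_antisymm (sup_le (h.le_succ _) (h.smul_le _)) (h.le_sup_smul _ (by omega))
  have hdim := Submodule.finrank_sup_add_finrank_inf_eq (M (j + 1)) (z • M (j + 1))
  rw [hsup, finrank_smul hz] at hdim
  have h₀ := h.finrank_eq j hj
  have h₁ := h.finrank_eq (j + 1) (by omega)
  have h₂ := h.finrank_eq (j + 2) (by omega)
  rw [finrank_smul hz]
  zify at hdim ⊢
  push_cast at h₁ h₂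
  linarith

theorem mem_of_mul_mem (hz : z ≠ 0) {j : ℕ} (hj : N₀ ≤ j) {f : F}
    (hf : f ∈ M (j + 1)) (hzf : z * f ∈ M (j + 1)) : f ∈ M j := by
  have hmem : z * f ∈ z • M j := by
    rw [h.smul_eq_inf_smul hz hj]
    exact ⟨hzf, Submodule.smul_mem_pointwise_smul f z _ hf⟩
  rwa [← inv_inv z, mem_inv_smul_iff (inv_ne_zero hz), inv_inv, inv_mul_cancel_left₀ hz] at hmem

theorem mem_of_pow_mul_mem (hz : z ≠ 0) {k j : ℕ} (hj : N₀ ≤ j) {f : F}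
    (hf : f ∈ M (j + k)) (hzf : z ^ k * f ∈ M (j + k)) : f ∈ M j :=
  GenusBound.mem_of_pow_mul_mem h.monotone (fun _ hj _ => h.mem_of_mul_mem hz hj) h.smul_le hj
    hf hzf

theorem notMem_range_algebraMap (hs : 0 < s) : z ∉ (algebraMap K F).range := by
  rintro ⟨c, rfl⟩
  have := h.finiteDimensional
  have hstable : M (N₀ + 1) ≤ M N₀ :=
    (h.le_sup_smul N₀ le_rfl).trans <| sup_le le_rfl <| smul_le_iff.2 fun a ha => by
      rw [← Algebra.smul_def]
      exact (M N₀).smul_mem c ha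
  have hdim := Submodule.finrank_mono hstable
  have h₀ := h.finrank_eq N₀ le_rfl
  have h₁ := h.finrank_eq (N₀ + 1) (by omega)
  zify at hdim
  push_cast at h₁
  linarith

end SheafFiltration

end SheafFiltration

section Span

variable {K C F : Type*} [Field K] [Field C] [Field F] [Algebra C F] [Algebra K F] {t : C}
  {N₀ : ℕ} {s χ χ' : ℤ} {M U : ℕ → Submodule K F}

theorem SheafFiltration.subset_span (h : SheafFiltration (algebraMap C F t) N₀ s χ M) {N : ℕ}
    (hN : N₀ ≤ N) (k : ℕ) : (M k : Set F) ⊆ Submodule.span C (M N : Set F) := by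
  have hge : ∀ k, N ≤ k → (M k : Set F) ⊆ Submodule.span C (M N : Set F) := by
    intro k hk
    induction k, hk using Nat.le_induction with
    | base => exact Submodule.subset_span
    | succ k hk ih =>
      intro x hx
      obtain ⟨a, ha, _, ⟨b, hb, rfl⟩, rfl⟩ :=
        Submodule.mem_sup.1 (h.le_sup_smul k (hN.trans hk) hx)
      refine add_mem (ih ha) ?_
      change algebraMap C F t * b ∈ _
      rw [← Algebra.smul_def]
      exact Submodule.smul_mem _ _ (ih hb)
  exact fun x hx => hge _ (le_max_right k N) (h.monotone (le_max_left k N) hx)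

variable [Algebra K C] [IsScalarTower K C F]

theorem finiteDimensional_span (Y : Submodule K F) [FiniteDimensional K Y] :
    FiniteDimensional C (Submodule.span C (Y : Set F)) := by
  rw [← Submodule.fg_iff_finiteDimensional] at *
  exact Submodule.FG.span ‹_›

/-- A finite-dimensional subalgebra of a field is a subfield. -/
theorem eq_top_of_mul_le {R : Submodule C F} [FiniteDimensional C R] (h1 : 1 ∈ R)
    (hmul : R * R ≤ R) {S : Set F} (hSR : S ⊆ R) (hS : IntermediateField.adjoin K S = ⊤) :
    R = ⊤ := by
  let A : Subalgebra C F :=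
    R.toSubalgebra h1 fun x y hx hy => hmul (Submodule.mul_mem_mul hx hy)
  have hfin : FiniteDimensional C A := ‹FiniteDimensional C R›
  let L : IntermediateField C F := A.toIntermediateField fun x hx =>
    A.inv_mem_of_algebraic (x := ⟨x, hx⟩)
      (Algebra.IsAlgebraic.isAlgebraic (R := C) (⟨x, hx⟩ : A)).algebraMap
  have hL : L.restrictScalars K = ⊤ :=
    top_le_iff.1 (hS ▸ IntermediateField.adjoin_le_iff.2 hSR)
  refine eq_top_iff.2 fun x _ => ?_
  have hx : x ∈ L.restrictScalars K := hL ▸ IntermediateField.mem_top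
  exact hx

theorem RingFiltration.span_eq_top (hU : RingFiltration U) {N : ℕ}
    [FiniteDimensional K (U N)]
    (hspan : ∀ k, (U k : Set F) ⊆ Submodule.span C (U N : Set F)) :
    Submodule.span C (U N : Set F) = ⊤ := by
  have : FiniteDimensional C (Submodule.span C (U N : Set F)) := finiteDimensional_span _
  refine eq_top_of_mul_le (K := K) (hspan 0 hU.one_mem) ?_ (Set.iUnion_subset hspan)
    hU.adjoin_eq_top
  rw [Submodule.span_mul_span, Submodule.span_le]
  rintro _ ⟨a, ha, b, hb, rfl⟩
  exact hspan _ (hU.mul_mem ha hb)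

theorem RingFiltration.finiteDimensional (hU : RingFiltration U) {N : ℕ}
    [FiniteDimensional K (U N)]
    (hspan : ∀ k, (U k : Set F) ⊆ Submodule.span C (U N : Set F)) : FiniteDimensional C F := by
  have : FiniteDimensional C (Submodule.span C (U N : Set F)) := finiteDimensional_span _
  rw [hU.span_eq_top hspan] at this
  exact Submodule.topEquiv.finiteDimensional

theorem SheafFiltration.span_eq_top (hU : SheafFiltration (algebraMap C F t) N₀ s χ U)
    (hR : RingFiltration U) (hM : SheafFiltration (algebraMap C F t) N₀ s χ' M)
    (hUM : ∀ i j, U i * M j ≤ M (i + j)) {k : ℕ} (hk : M k ≠ ⊥) {N : ℕ} (hN : N₀ ≤ N) :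
    Submodule.span C (M N : Set F) = ⊤ := by
  have := hU.finiteDimensional N
  obtain ⟨m, hm, hm0⟩ := (M k).ne_bot_iff.1 hk
  have hmU : Submodule.span C (U N : Set F) ≤
      (Submodule.span C (M N : Set F)).comap (LinearMap.mulLeft C m) :=
    Submodule.span_le.2 fun u hu => by
      rw [Submodule.comap_coe, Set.mem_preimage, LinearMap.mulLeft_apply, mul_comm]
      exact hM.subset_span hN _ (hUM _ _ (Submodule.mul_mem_mul hu hm))
  rw [hR.span_eq_top (hU.subset_span hN)] at hmU
  refine eq_top_iff.2 fun x _ => ?_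
  have hx : m * (m⁻¹ * x) ∈ Submodule.span C (M N : Set F) := hmU trivial
  rwa [mul_inv_cancel_left₀ hm0] at hx

end Span

/-! ### Duality -/

section DualPairing

variable {K V W : Type*} [Field K] [AddCommGroup V] [Module K V] [AddCommGroup W] [Module K W]
  [FiniteDimensional K W] {B : V →ₗ[K] Dual K W} {Y : Submodule K W}

theorem finrank_add_finrank_le_of_injective (hB : Function.Injective B)
    (hY : LinearMap.range B ≤ Y.dualAnnihilator) : finrank K V + finrank K Y ≤ finrank K W := by
  have hrange := Submodule.finrank_mono hY
  rw [LinearMap.finrank_range_of_inj hB] at hrange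
  have := Subspace.finrank_add_finrank_dualAnnihilator_eq Y
  omega

theorem finrank_le_of_dualAnnihilator_le_range [FiniteDimensional K V]
    (hY : Y.dualAnnihilator ≤ LinearMap.range B) : finrank K W ≤ finrank K V + finrank K Y := by
  have hrange := (Submodule.finrank_mono hY).trans (LinearMap.finrank_range_le B)
  have := Subspace.finrank_add_finrank_dualAnnihilator_eq Y
  omega

end DualPairing

section Cech

variable {K F : Type*} [Field K] [Field F] [Algebra K F]

/-- The pairing `(y, x) ↦ ρ (y x)` restricted to two subspaces. -/
def mulPairing (ρ : F →ₗ[K] K) (V W : Submodule K F) : V →ₗ[K] Dual K W :=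
  ((LinearMap.mul K F).compr₂ ρ).domRestrict₁₂ V W

/-- Global sections of the sheaf modelled by `M`: the elements regular at both ends of the pencil,
with poles of order at most `k`. -/
def globalSections (z : F) (M : ℕ → Submodule K F) (k : ℕ) : Submodule K F :=
  M k ⊓ (z ^ k)⁻¹ • M k

/-- The coboundaries, with poles of order at most `k`, of the Čech complex of the two charts
`z ≠ 0` and `z ≠ ∞`. -/
def cechBoundary (z : F) (M : ℕ → Submodule K F) (k : ℕ) : Submodule K F :=
  M k ⊔ (z ^ k)⁻¹ • M k

/-- The sections, with poles of order at most `k`, over the overlap of the two Čech charts. -/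
def cechOverlap (z : F) (M : ℕ → Submodule K F) (k : ℕ) : Submodule K F :=
  (z ^ k)⁻¹ • M (2 * k)

/-- The annihilator of all Čech coboundaries under the pairing `ρ (x y)`; it plays the role of
the global sections of the dualizing twist. -/
def dualModule (ρ : F →ₗ[K] K) (z : F) (M : ℕ → Submodule K F) : Submodule K F :=
  (⨆ k, cechBoundary z M k).dualAnnihilator.comap ((LinearMap.mul K F).compr₂ ρ)

variable {z : F} {N₀ : ℕ} {s χ : ℤ} {M U : ℕ → Submodule K F} {ρ : F →ₗ[K] K}

theorem mem_dualModule {y : F} :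
    y ∈ dualModule ρ z M ↔ ∀ x ∈ ⨆ k, cechBoundary z M k, ρ (y * x) = 0 :=
  Submodule.mem_dualAnnihilator _

theorem smul_cechBoundary_le (hz : z ≠ 0) (hUM : ∀ i j, U i * M j ≤ M (i + j)) {n : ℕ} {e : F}
    (he : e ∈ globalSections z M n) (k : ℕ) :
    e • cechBoundary z U k ≤ cechBoundary z M (k + n) := by
  have hmul {e u : F} (he : e ∈ M n) (hu : u ∈ U k) : e * u ∈ M (k + n) := by
    rw [mul_comm]
    exact hUM k n (Submodule.mul_mem_mul hu he)
  have he' := (mem_inv_smul_iff (pow_ne_zero n hz)).1 he.2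
  rw [cechBoundary, Submodule.smul_sup']
  refine sup_le_sup (smul_le_iff.2 fun u hu => hmul he.1 hu) (smul_le_iff.2 fun x hx => ?_)
  rw [mem_inv_smul_iff (pow_ne_zero k hz)] at hx
  rw [mem_inv_smul_iff (pow_ne_zero _ hz), pow_add,
    show z ^ k * z ^ n * (e * x) = z ^ n * e * (z ^ k * x) by ring]
  exact hmul he' hx

theorem globalSections_mul_dualModule_le (hz : z ≠ 0) (hUM : ∀ i j, U i * M j ≤ M (i + j)) (n : ℕ) :
    globalSections z M n * dualModule ρ z M ≤ dualModule ρ z U := by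
  refine Submodule.mul_le.2 fun e he y hy => mem_dualModule.2 fun x hx => ?_
  have hex : e • (⨆ k, cechBoundary z U k) ≤ ⨆ k, cechBoundary z M k := by
    rw [Submodule.smul_iSup']
    exact iSup_le fun k =>
      (smul_cechBoundary_le hz hUM he k).trans (le_iSup (cechBoundary z M) (k + n))
  rw [show e * y * x = y * (e * x) by ring]
  exact mem_dualModule.1 hy _ (smul_le_iff.1 hex x hx)

theorem globalSections_le_one [IsIntegrallyClosedIn K F] (hU : SheafFiltration z N₀ s χ U)
    (hR : RingFiltration U) (hz : z ≠ 0) {N : ℕ} (hN : N₀ ≤ N) : globalSections z U N ≤ 1 := by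
  have := hU.finiteDimensional N
  rintro f ⟨hf, hzf⟩
  rw [SetLike.mem_coe, mem_inv_smul_iff (pow_ne_zero N hz)] at hzf
  refine mem_one_of_smul_le (A := U N)
    ((U N).ne_bot_iff.2 ⟨1, hU.monotone (Nat.zero_le N) hR.one_mem, one_ne_zero⟩)
    (smul_le_iff.2 fun a ha => hU.mem_of_pow_mul_mem hz hN (hR.mul_mem hf ha) ?_)
  rw [← mul_assoc]
  exact hR.mul_mem hzf ha

instance finiteDimensional_cechOverlap [∀ k, FiniteDimensional K (M k)] (N : ℕ) :
    FiniteDimensional K (cechOverlap z M N) :=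
  finiteDimensional_smul

namespace SheafFiltration

variable (hM : SheafFiltration z N₀ s χ M) (hz : z ≠ 0)
include hM hz

theorem zpow_mul_mem_iSup_cechBoundary {N : ℕ} {x : F} (hx : x ∈ M N) {n : ℤ}
    (hn : n ≤ -N ∨ 0 ≤ n) : z ^ n * x ∈ ⨆ k, cechBoundary z M k := by
  rcases hn with hn | hn
  · obtain ⟨k, rfl⟩ : ∃ k : ℕ, n = -k := ⟨n.natAbs, by omega⟩
    refine le_iSup (cechBoundary z M) k (le_sup_right (a := M k) ?_)
    rw [mem_inv_smul_iff (pow_ne_zero k hz), zpow_neg, zpow_natCast,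
      mul_inv_cancel_left₀ (pow_ne_zero k hz)]
    exact hM.monotone (by omega) hx
  · lift n to ℕ using hn
    rw [zpow_natCast]
    exact le_iSup (cechBoundary z M) (N + n) (le_sup_left (a := M (N + n))
      (pow_mul_mem hM.smul_le n hx))

theorem zpow_mul_mem_cechOverlap {N : ℕ} {x : F} (hx : x ∈ M N) {n : ℤ} (hn : -N ≤ n)
    (hn' : n ≤ 0) : z ^ n * x ∈ cechOverlap z M N := by
  obtain ⟨k, rfl⟩ : ∃ k : ℕ, n = k - N := ⟨(n + N).toNat, by omega⟩
  rw [cechOverlap, mem_inv_smul_iff (pow_ne_zero N hz), ← zpow_natCast z N, ← mul_assoc,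
    ← zpow_add₀ hz, add_sub_cancel, zpow_natCast]
  exact hM.monotone (by omega) (pow_mul_mem hM.smul_le k hx)

theorem cechBoundary_le_cechOverlap (N : ℕ) : cechBoundary z M N ≤ cechOverlap z M N := by
  refine sup_le (fun x hx => ?_) (Submodule.map_mono (hM.monotone (by omega)))
  simpa using hM.zpow_mul_mem_cechOverlap hz hx (n := 0) (by omega) le_rfl

/-- Riemann–Roch, `h¹ = h⁰ - χ`, computed by the Čech complex. -/
theorem finrank_cechOverlap_sub_finrank_cechBoundary {N : ℕ} (hN : N₀ ≤ N) :
    (finrank K (cechOverlap z M N) : ℤ) - finrank K (cechBoundary z M N) =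
      finrank K (globalSections z M N) - χ := by
  have := hM.finiteDimensional
  have hzN : (z ^ N)⁻¹ ≠ 0 := inv_ne_zero (pow_ne_zero N hz)
  have hdim : finrank K (cechBoundary z M N) + finrank K (globalSections z M N) =
      finrank K (M N) + finrank K (M N) := by
    rw [cechBoundary, globalSections, Submodule.finrank_sup_add_finrank_inf_eq, finrank_smul hzN]
  have h₁ := hM.finrank_eq N hN
  have h₂ := hM.finrank_eq (2 * N) (by omega)
  rw [cechOverlap, finrank_smul hzN]
  zify at hdim
  push_cast at h₂
  linarith

end SheafFiltration

end Cech

section Serre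

variable {K C F : Type*} [Field K] [Field C] [Field F] [Algebra K C] [Algebra C F]

/-- The field `C` generated over `K` by `t`, with a `K`-linear residue functional whose associated
pairing is nondegenerate; for `C = K(t)` it is the coefficient of `t⁻¹` in the Laurent expansion. -/
structure IsResidue (t : C) (res : C →ₗ[K] K) : Prop where
  apply_zpow : ∀ n : ℤ, res (t ^ n) = if n = -1 then 1 else 0
  eq_zero : ∀ c, (∀ n : ℤ, res (t ^ n * c) = 0) → c = 0
  exists_forall_ge : ∀ c, ∃ n₀ : ℤ, ∀ n, n₀ ≤ n → res (t ^ n * c) = 0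
  exists_frac : ∀ c : C, ∃ p q : Polynomial K, q ≠ 0 ∧
    Polynomial.aeval t q * c = Polynomial.aeval t p

variable {t : C} {res : C →ₗ[K] K}

theorem IsResidue.ne_zero (hres : IsResidue t res) : t ≠ 0 := by
  rintro rfl
  simpa using hres.apply_zpow (-1)

theorem IsResidue.algebraMap_ne_zero (hres : IsResidue t res) : algebraMap C F t ≠ 0 :=
  (map_ne_zero _).2 hres.ne_zero

theorem IsResidue.apply_zpow_mul_sum (hres : IsResidue t res) {N : ℕ} {c : ℤ → K}
    (hc : ∀ n : ℤ, n < -N ∨ 0 ≤ n → c n = 0) (n : ℤ) :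
    res (t ^ n * ∑ j ∈ Finset.range N, algebraMap K C (c (-j - 1)) * t ^ j) = c n := by
  have hterm (j : ℕ) : res (t ^ n * (algebraMap K C (c (-j - 1)) * t ^ j)) =
      if n + j = -1 then c n else 0 := by
    rw [mul_left_comm, ← Algebra.smul_def, map_smul, ← zpow_natCast t j,
      ← zpow_add₀ hres.ne_zero, hres.apply_zpow, smul_eq_mul, mul_ite, mul_one, mul_zero]
    split_ifs with h
    · rw [show -(j : ℤ) - 1 = n by omega]
    · rfl
  simp only [Finset.mul_sum, map_sum, hterm]
  by_cases hn : n < -N ∨ 0 ≤ n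
  · simp [hc n hn]
  · rw [Finset.sum_eq_single (-1 - n).toNat, if_pos (by omega)]
    · intro j _ hj
      rw [if_neg (by omega)]
    · intro hj
      rw [Finset.mem_range] at hj
      omega

variable [Algebra K F] [IsScalarTower K C F]

/-- The `K`-linear functional on `F` obtained from a residue on `C` and a `C`-linear functional. -/
def resForm (res : C →ₗ[K] K) (lam : F →ₗ[C] C) : F →ₗ[K] K :=
  res ∘ₗ lam.restrictScalars K

variable {lam : F →ₗ[C] C}

theorem resForm_mul_zpow_mul (n : ℤ) (y x : F) :
    resForm res lam (y * (algebraMap C F t ^ n * x)) = res (t ^ n * lam (y * x)) := by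
  rw [← smul_eq_mul (t ^ n), ← map_smul, Algebra.smul_def, map_zpow₀, mul_left_comm]
  rfl

variable {N₀ : ℕ} {s χ : ℤ} {M : ℕ → Submodule K F}

section Upper

variable {z : F} {ρ : F →ₗ[K] K}

theorem range_mulPairing_le (N : ℕ) (X : Submodule K F) :
    LinearMap.range (mulPairing ρ (dualModule ρ z M) X) ≤
      ((cechBoundary z M N).submoduleOf X).dualAnnihilator := by
  rintro _ ⟨y, rfl⟩
  exact (Submodule.mem_dualAnnihilator _).2 fun x hx =>
    mem_dualModule.1 y.2 x (le_iSup (cechBoundary z M) N hx)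

end Upper

theorem mulPairing_injective (hres : IsResidue t res) (hlam : lam ≠ 0)
    (hM : SheafFiltration (algebraMap C F t) N₀ s χ M) {N : ℕ}
    (hspan : Submodule.span C (M N : Set F) = ⊤) :
    Function.Injective (mulPairing (resForm res lam)
      (dualModule (resForm res lam) (algebraMap C F t) M)
      (cechOverlap (algebraMap C F t) M N)) := by
  refine LinearMap.ker_eq_bot.1 (LinearMap.ker_eq_bot'.2 fun y hy => ?_)
  have hy' : ∀ x ∈ cechOverlap (algebraMap C F t) M N, resForm res lam (y * x) = 0 :=
    fun x hx => LinearMap.congr_fun hy ⟨x, hx⟩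
  have hz : algebraMap C F t ≠ 0 := hres.algebraMap_ne_zero
  have hker : Submodule.span C (M N : Set F) ≤ LinearMap.ker (lam ∘ₗ LinearMap.mulLeft C y) :=
    Submodule.span_le.2 fun x hx => hres.eq_zero _ fun n => by
      rw [LinearMap.comp_apply, LinearMap.mulLeft_apply, ← resForm_mul_zpow_mul]
      by_cases hn : n ≤ -N ∨ 0 ≤ n
      · exact mem_dualModule.1 y.2 _ (hM.zpow_mul_mem_iSup_cechBoundary hz hx hn)
      · exact hy' _ (hM.zpow_mul_mem_cechOverlap hz hx (by omega) (by omega))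
  rw [hspan] at hker
  by_contra hy0
  refine hlam (LinearMap.ext fun x => ?_)
  have hx : lam (y * ((y : F)⁻¹ * x)) = 0 := hker (Submodule.mem_top (x := (y : F)⁻¹ * x))
  rwa [mul_inv_cancel_left₀ (by simpa using hy0)] at hx

end Serre

section Represent

open Polynomial

variable {K F : Type*} [Field K] [Field F] [Algebra K F]

/-- The elements all of whose translates by powers of `z` are equalized by `φ` and `ψ`. -/
def zpowEqLocus (z : F) (φ ψ : F →ₗ[K] K) : Submodule K F :=
  ⨅ n : ℤ, (LinearMap.eqLocus φ ψ).comap (LinearMap.mulLeft K (z ^ n))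

variable {z : F} {φ ψ : F →ₗ[K] K}

theorem mem_zpowEqLocus {x : F} :
    x ∈ zpowEqLocus z φ ψ ↔ ∀ n : ℤ, φ (z ^ n * x) = ψ (z ^ n * x) :=
  Submodule.mem_iInf _

theorem aeval_mul_mem_zpowEqLocus (hz : z ≠ 0) (p : K[X]) {x : F}
    (hx : x ∈ zpowEqLocus z φ ψ) : aeval z p * x ∈ zpowEqLocus z φ ψ := by
  rw [aeval_eq_sum_range, Finset.sum_mul]
  refine Submodule.sum_mem _ fun j _ => ?_
  rw [smul_mul_assoc]
  refine Submodule.smul_mem _ _ (mem_zpowEqLocus.2 fun n => ?_)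
  rw [← mul_assoc, ← zpow_natCast z j, ← zpow_add₀ hz]
  exact mem_zpowEqLocus.1 hx (n + j)

theorem eq_zero_of_linearRecurrence {Δ : ℤ → K} {q : K[X]} (hq : q ≠ 0)
    (hrec : ∀ n : ℤ, q.sum (fun j a => a * Δ (n + j)) = 0) {n₀ : ℤ}
    (hΔ : ∀ n, n₀ ≤ n → Δ n = 0) (n : ℤ) : Δ n = 0 := by
  have hdesc : ∀ i : ℕ, ∀ n : ℤ, n₀ - i ≤ n → Δ n = 0 := by
    intro i
    induction i with
    | zero => exact fun n hn => hΔ n (by simpa using hn)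
    | succ i ih =>
      intro n hn
      have hsum := hrec (n - q.natTrailingDegree)
      rw [sum_def, Finset.sum_eq_single q.natTrailingDegree] at hsum
      · rw [sub_add_cancel] at hsum
        exact (mul_eq_zero.1 hsum).resolve_left (trailingCoeff_nonzero_iff_nonzero.2 hq)
      · intro b hb hne
        have hlt : q.natTrailingDegree < b :=
          lt_of_le_of_ne (natTrailingDegree_le_of_mem_supp b hb) hne.symm
        rw [ih _ (by push_cast at hn; omega), mul_zero]
      · intro hnot
        rw [notMem_support_iff.1 hnot, zero_mul]
  exact hdesc (n₀ - n).toNat n (by omega)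

theorem mem_zpowEqLocus_of_aeval_mul_mem (hz : z ≠ 0) {q : K[X]} (hq : q ≠ 0) {x : F}
    (hqx : aeval z q * x ∈ zpowEqLocus z φ ψ) {n₀ : ℤ}
    (hn₀ : ∀ n, n₀ ≤ n → φ (z ^ n * x) = ψ (z ^ n * x)) : x ∈ zpowEqLocus z φ ψ := by
  refine mem_zpowEqLocus.2 fun n => sub_eq_zero.1 <|
    eq_zero_of_linearRecurrence (Δ := fun n => φ (z ^ n * x) - ψ (z ^ n * x)) hq (fun n => ?_)
      (fun n hn => sub_eq_zero.2 (hn₀ n hn)) n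
  rw [← sub_eq_zero.2 (mem_zpowEqLocus.1 hqx n), aeval_eq_sum_range,
    sum_over_range _ fun j => zero_mul _]
  simp only [Finset.sum_mul, Finset.mul_sum, map_sum, ← Finset.sum_sub_distrib]
  refine Finset.sum_congr rfl fun j _ => ?_
  rw [zpow_add₀ hz, zpow_natCast, smul_mul_assoc, mul_smul_comm, map_smul, map_smul, mul_assoc,
    mul_sub]
  rfl

variable {C : Type*} [Field C] [Algebra K C] [Algebra C F] [IsScalarTower K C F]

theorem exists_aeval_mul_mem_of_mem_span {t : C}
    (hfrac : ∀ c : C, ∃ p q : K[X], q ≠ 0 ∧ aeval t q * c = aeval t p) {W : Submodule K F}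
    (hW : ∀ p : K[X], ∀ x ∈ W, aeval (algebraMap C F t) p * x ∈ W) {x : F}
    (hx : x ∈ Submodule.span C (W : Set F)) :
    ∃ q : K[X], q ≠ 0 ∧ aeval (algebraMap C F t) q * x ∈ W := by
  induction hx using Submodule.span_induction with
  | mem x hx => exact ⟨1, one_ne_zero, by simpa using hx⟩
  | zero => exact ⟨1, one_ne_zero, by simp⟩
  | add x x' _ _ hx hx' =>
    obtain ⟨q, hq, hqx⟩ := hx
    obtain ⟨q', hq', hqx'⟩ := hx'
    refine ⟨q * q', mul_ne_zero hq hq', ?_⟩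
    rw [mul_add]
    refine W.add_mem ?_ ?_
    · rw [mul_comm q, map_mul, mul_assoc]
      exact hW _ _ hqx
    · rw [map_mul, mul_assoc]
      exact hW _ _ hqx'
  | smul c x _ hx =>
    obtain ⟨q, hq, hqx⟩ := hx
    obtain ⟨p', q', hq', hc⟩ := hfrac c
    refine ⟨q' * q, mul_ne_zero hq' hq, ?_⟩
    rw [Algebra.smul_def, map_mul, mul_mul_mul_comm, aeval_algebraMap_apply, ← map_mul, hc,
      ← aeval_algebraMap_apply]
    exact hW _ _ hqx

/-- The dual of the finite extension `F/C` is one-dimensional over `F`. -/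
theorem exists_forall_apply_mul_eq [FiniteDimensional C F] {lam : F →ₗ[C] C} (hlam : lam ≠ 0)
    (Φ : F →ₗ[C] C) : ∃ y : F, ∀ x, lam (y * x) = Φ x := by
  let T : F →ₗ[C] Dual C F := (LinearMap.mul C F).compr₂ lam
  have hinj : Function.Injective T :=
    LinearMap.ker_eq_bot.1 <| LinearMap.ker_eq_bot'.2 fun y hy => by
      by_contra hy0
      refine hlam (LinearMap.ext fun x => ?_)
      rw [← mul_inv_cancel_left₀ hy0 x]
      exact LinearMap.congr_fun hy (y⁻¹ * x)
  obtain ⟨y, hy⟩ := (LinearMap.injective_iff_surjective_of_finrank_eq_finrank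
    (Subspace.dual_finrank_eq (K := C) (V := F)).symm).1 hinj Φ
  exact ⟨y, LinearMap.congr_fun hy⟩

end Represent

section Represent

variable {K C F : Type*} [Field K] [Field C] [Field F] [Algebra K C] [Algebra C F] [Algebra K F]
  {t : C} {res : C →ₗ[K] K} {lam : F →ₗ[C] C} {N₀ : ℕ} {s χ : ℤ}
  {M : ℕ → Submodule K F} {ψ : F →ₗ[K] K}

/-- On a basis contained in `M N` the values of `Φ` are the Laurent polynomials in `t` with
coefficients prescribed by `ψ`. -/
theorem IsResidue.exists_basis_apply_eq (hres : IsResidue t res)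
    (hM : SheafFiltration (algebraMap C F t) N₀ s χ M) {N : ℕ}
    (hspan : Submodule.span C (M N : Set F) = ⊤)
    (hψ : ∀ x ∈ ⨆ k, cechBoundary (algebraMap C F t) M k, ψ x = 0) :
    ∃ Φ : F →ₗ[C] C, ∃ b : Set F, Submodule.span C b = ⊤ ∧
      ∀ x ∈ b, ∀ n : ℤ, res (t ^ n * Φ x) = ψ (algebraMap C F t ^ n * x) := by
  let b := Basis.ofSpan hspan.ge
  let z := algebraMap C F t
  let Φ : F →ₗ[C] C := b.constr C fun i =>
    ∑ j ∈ Finset.range N, algebraMap K C (ψ (z ^ (-j - 1 : ℤ) * b i)) * t ^ j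
  refine ⟨Φ, Set.range b, b.span_eq, ?_⟩
  rintro _ ⟨i, rfl⟩ n
  have hi : b i ∈ M N := Basis.ofSpan_subset hspan.ge ⟨i, rfl⟩
  rw [b.constr_basis]
  exact hres.apply_zpow_mul_sum (c := fun n => ψ (z ^ n * b i)) (fun n hn => hψ _
    (hM.zpow_mul_mem_iSup_cechBoundary hres.algebraMap_ne_zero hi (by omega))) n

variable [IsScalarTower K C F]

theorem resForm_comp_mulLeft_zpow_mul {Φ : F →ₗ[C] C} {y : F} (hy : ∀ x, lam (y * x) = Φ x) (n : ℤ)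
    (x : F) : (resForm res lam ∘ₗ LinearMap.mulLeft K y) (algebraMap C F t ^ n * x) =
      res (t ^ n * Φ x) := by
  rw [LinearMap.comp_apply, LinearMap.mulLeft_apply, resForm_mul_zpow_mul, hy]

theorem IsResidue.exists_le_zpowEqLocus [FiniteDimensional C F] (hres : IsResidue t res)
    (hlam : lam ≠ 0) (hM : SheafFiltration (algebraMap C F t) N₀ s χ M) {N : ℕ}
    (hspan : Submodule.span C (M N : Set F) = ⊤)
    (hψ : ∀ x ∈ ⨆ k, cechBoundary (algebraMap C F t) M k, ψ x = 0) :
    ∃ y, ∀ k, M k ≤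
      zpowEqLocus (algebraMap C F t) (resForm res lam ∘ₗ LinearMap.mulLeft K y) ψ := by
  have hz : algebraMap C F t ≠ 0 := hres.algebraMap_ne_zero
  obtain ⟨Φ, b, hb, hΦ⟩ := hres.exists_basis_apply_eq hM hspan hψ
  obtain ⟨y, hy⟩ := exists_forall_apply_mul_eq hlam Φ
  refine ⟨y, fun k x hx => ?_⟩
  have hbW : b ⊆ zpowEqLocus (algebraMap C F t) (resForm res lam ∘ₗ LinearMap.mulLeft K y) ψ :=
    fun e he => mem_zpowEqLocus.2 fun n => by rw [resForm_comp_mulLeft_zpow_mul hy, hΦ e he n]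
  have hxW := Submodule.span_mono hbW (hb ▸ Submodule.mem_top : x ∈ Submodule.span C b)
  obtain ⟨q, hq, hqx⟩ := exists_aeval_mul_mem_of_mem_span hres.exists_frac
    (fun p e he => aeval_mul_mem_zpowEqLocus hz p he) hxW
  obtain ⟨n₀, hn₀⟩ := hres.exists_forall_ge (Φ x)
  refine mem_zpowEqLocus_of_aeval_mul_mem hz hq hqx (n₀ := max n₀ 0) fun n hn => ?_
  rw [resForm_comp_mulLeft_zpow_mul hy, hn₀ n (le_of_max_le_left hn),
    hψ _ (hM.zpow_mul_mem_iSup_cechBoundary hz hx (.inr (le_of_max_le_right hn)))]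

end Represent

section SerreDuality

variable {K F : Type*} [Field K] [Field F] [Algebra K F] {z : F} {N₀ : ℕ} {s χ : ℤ}
  {M : ℕ → Submodule K F}

theorem exists_mem_dualAnnihilator_extending {X Y S : Submodule K F} (h : X ⊓ S ≤ Y) {φ : Dual K X}
    (hφ : φ ∈ (Y.submoduleOf X).dualAnnihilator) :
    ∃ ψ ∈ S.dualAnnihilator, ∀ x : X, ψ x = φ x := by
  obtain ⟨φ', rfl⟩ := Subspace.dualRestrict_surjective (W := X) φ
  have hφ' : φ' ∈ (X ⊓ S).dualAnnihilator := (Submodule.mem_dualAnnihilator _).2 fun x hx =>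
    (Submodule.mem_dualAnnihilator _).1 hφ ⟨x, hx.1⟩ (h hx)
  rw [Subspace.dualAnnihilator_inf_eq] at hφ'
  obtain ⟨α, hα, ψ, hψ, rfl⟩ := Submodule.mem_sup.1 hφ'
  refine ⟨ψ, hψ, fun x => ?_⟩
  simp [(Submodule.mem_dualAnnihilator α).1 hα x x.2]

namespace SheafFiltration

variable (hM : SheafFiltration z N₀ s χ M) (hz : z ≠ 0)
include hM hz

theorem monotone_inv_pow_smul : Monotone fun k => (z ^ k)⁻¹ • M k := by
  refine monotone_nat_of_le_succ fun k x hx => ?_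
  rw [mem_inv_smul_iff (pow_ne_zero _ hz)] at hx ⊢
  rw [pow_succ', mul_assoc]
  exact smul_le_iff.1 (hM.smul_le k) _ hx

theorem monotone_globalSections : Monotone (globalSections z M) := fun _ _ h =>
  inf_le_inf (hM.monotone h) (hM.monotone_inv_pow_smul hz h)

theorem monotone_cechBoundary : Monotone (cechBoundary z M) := fun _ _ h =>
  sup_le_sup (hM.monotone h) (hM.monotone_inv_pow_smul hz h)

theorem cechOverlap_inf_cechBoundary_le {N : ℕ} (hN : N₀ ≤ N) (l : ℕ) :
    cechOverlap z M N ⊓ cechBoundary z M (N + l) ≤ cechBoundary z M N := by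
  rintro x ⟨hx, hxl⟩
  obtain ⟨a, ha, b, hb, rfl⟩ := Submodule.mem_sup.1 hxl
  rw [SetLike.mem_coe, cechOverlap, mem_inv_smul_iff (pow_ne_zero N hz)] at hx
  rw [mem_inv_smul_iff (pow_ne_zero _ hz)] at hb
  have pow_mul_mem (l : ℕ) {k m : ℕ} (hkm : k + l ≤ m) {f : F} (hf : f ∈ M k) : z ^ l * f ∈ M m :=
    hM.monotone hkm (GenusBound.pow_mul_mem hM.smul_le l hf)
  refine Submodule.add_mem_sup (hM.mem_of_pow_mul_mem hz hN (k := N + l) (hM.monotone (by omega) ha)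
    ?_) ((mem_inv_smul_iff (pow_ne_zero N hz)).2
      (hM.mem_of_pow_mul_mem hz hN (k := N + l) ?_ ?_))
  · rw [show z ^ (N + l) * a = z ^ l * (z ^ N * (a + b)) - z ^ (N + l) * b by ring]
    exact sub_mem (pow_mul_mem l (by omega) hx) (hM.monotone (by omega) hb)
  · rw [show z ^ N * b = z ^ N * (a + b) - z ^ N * a by ring]
    exact sub_mem (hM.monotone (by omega) hx) (pow_mul_mem N (by omega) ha)
  · rw [mul_left_comm]
    exact pow_mul_mem N (by omega) hb

theorem cechOverlap_inf_iSup_cechBoundary_le {N : ℕ} (hN : N₀ ≤ N) :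
    cechOverlap z M N ⊓ ⨆ k, cechBoundary z M k ≤ cechBoundary z M N := by
  rintro x ⟨hx, hxS⟩
  have hmono := hM.monotone_cechBoundary hz
  obtain ⟨k, hk⟩ := (Submodule.mem_iSup_of_directed _ hmono.directed_le).1 hxS
  exact hM.cechOverlap_inf_cechBoundary_le hz hN k ⟨hx, hmono (Nat.le_add_left k N) hk⟩

end SheafFiltration

variable {C : Type*} [Field C] [Algebra K C] [Algebra C F] [IsScalarTower K C F] {t : C}
  {res : C →ₗ[K] K} {lam : F →ₗ[C] C} (hres : IsResidue t res) (hlam : lam ≠ 0)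
  (hM : SheafFiltration (algebraMap C F t) N₀ s χ M) {N : ℕ}
  (hspan : Submodule.span C (M N : Set F) = ⊤)
include hres hlam hM hspan

theorem finiteDimensional_dualModule :
    FiniteDimensional K (dualModule (resForm res lam) (algebraMap C F t) M) := by
  have := hM.finiteDimensional
  exact .of_injective _ (mulPairing_injective hres hlam hM hspan)

theorem dualAnnihilator_le_range_mulPairing [FiniteDimensional C F] (hN : N₀ ≤ N) :
    ((cechBoundary (algebraMap C F t) M N).submoduleOf
      (cechOverlap (algebraMap C F t) M N)).dualAnnihilator ≤
    LinearMap.range (mulPairing (resForm res lam)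
      (dualModule (resForm res lam) (algebraMap C F t) M)
      (cechOverlap (algebraMap C F t) M N)) := by
  intro φ hφ
  have hz : algebraMap C F t ≠ 0 := hres.algebraMap_ne_zero
  obtain ⟨ψ, hψ, hψφ⟩ := exists_mem_dualAnnihilator_extending
    (hM.cechOverlap_inf_iSup_cechBoundary_le hz hN) hφ
  have hψ' := (Submodule.mem_dualAnnihilator ψ).1 hψ
  obtain ⟨y, hy⟩ := hres.exists_le_zpowEqLocus hlam hM hspan hψ'
  have hshift {k : ℕ} {f : F} (n : ℕ) (hf : (algebraMap C F t) ^ n * f ∈ M k) :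
      resForm res lam (y * f) = ψ f := by
    have := mem_zpowEqLocus.1 (hy k hf) (-n)
    rwa [zpow_neg, zpow_natCast, inv_mul_cancel_left₀ (pow_ne_zero n hz)] at this
  have hboundary (k : ℕ) : cechBoundary (algebraMap C F t) M k ≤
      LinearMap.eqLocus (resForm res lam ∘ₗ LinearMap.mulLeft K y) ψ :=
    sup_le (fun f hf => hshift 0 (by simpa using hf)) fun f hf =>
      hshift k ((mem_inv_smul_iff (pow_ne_zero k hz)).1 hf)
  refine ⟨⟨y, mem_dualModule.2 fun x hx => ?_⟩, LinearMap.ext fun x => ?_⟩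
  · exact (iSup_le hboundary hx : resForm res lam (y * x) = ψ x).trans (hψ' x hx)
  · exact (hshift N ((mem_inv_smul_iff (pow_ne_zero N hz)).1 x.2)).trans (hψφ x)

theorem finrank_dualModule [FiniteDimensional C F] (hN : N₀ ≤ N) :
    (finrank K (dualModule (resForm res lam) (algebraMap C F t) M) : ℤ) =
      finrank K (globalSections (algebraMap C F t) M N) - χ := by
  have hz : algebraMap C F t ≠ 0 := hres.algebraMap_ne_zero
  have := hM.finiteDimensional
  have := finiteDimensional_dualModule hres hlam hM hspan
  have hYX := hM.cechBoundary_le_cechOverlap hz N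
  have hY : finrank K ((cechBoundary (algebraMap C F t) M N).submoduleOf _) =
      finrank K (cechBoundary (algebraMap C F t) M N) :=
    (Submodule.submoduleOfEquivOfLe hYX).finrank_eq
  have hle := finrank_add_finrank_le_of_injective (mulPairing_injective hres hlam hM hspan)
    (range_mulPairing_le N _)
  have hge := finrank_le_of_dualAnnihilator_le_range
    (dualAnnihilator_le_range_mulPairing hres hlam hM hspan hN)
  have hRR := hM.finrank_cechOverlap_sub_finrank_cechBoundary hz hN
  rw [hY] at hle hge
  omega

end SerreDuality

/-! ### Clifford's inequality -/

section Residue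

open RatFunc LaurentSeries

variable {K : Type*} [Field K]

theorem aeval_ratFuncX (p : Polynomial K) :
    Polynomial.aeval (RatFunc.X : RatFunc K) p = algebraMap (Polynomial K) (RatFunc K) p := by
  rw [← RatFunc.algebraMap_X, Polynomial.aeval_algebraMap_apply, Polynomial.aeval_X_left_apply]

variable (K)

/-- The coefficient of `X⁻¹` in the Laurent expansion at `0` of a rational function. -/
noncomputable def ratRes : RatFunc K →ₗ[K] K where
  toFun c := (algebraMap (RatFunc K) K⸨X⸩ c).coeff (-1)
  map_add' := by intros; simp
  map_smul' a c := by
    have ha : algebraMap (RatFunc K) K⸨X⸩ (algebraMap K (RatFunc K) a) = HahnSeries.C a := by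
      rw [IsScalarTower.algebraMap_apply K (Polynomial K) (RatFunc K),
        ← IsScalarTower.algebraMap_apply (Polynomial K) (RatFunc K) K⸨X⸩]
      simp
    rw [Algebra.smul_def, map_mul, ha, HahnSeries.C_mul_eq_smul]
    simp

theorem ratRes_X_zpow_mul (n : ℤ) (c : RatFunc K) :
    ratRes K (RatFunc.X ^ n * c) = (algebraMap (RatFunc K) K⸨X⸩ c).coeff (-1 - n) := by
  change (algebraMap (RatFunc K) K⸨X⸩ (RatFunc.X ^ n * c)).coeff (-1) = _
  rw [map_mul, map_zpow₀, RatFunc.coe_X, ← RatFunc.single_zpow]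
  simpa using HahnSeries.coeff_single_mul_add (r := (1 : K))
    (x := algebraMap (RatFunc K) K⸨X⸩ c) (a := -1 - n) (b := n)

theorem isResidue_ratRes : IsResidue (RatFunc.X : RatFunc K) (ratRes K) where
  apply_zpow n := by
    rw [← mul_one (RatFunc.X ^ n), ratRes_X_zpow_mul, map_one, HahnSeries.coeff_one]
    congr 1
    rw [eq_iff_iff]
    omega
  eq_zero c hc := by
    refine (map_eq_zero (algebraMap (RatFunc K) K⸨X⸩)).1 (HahnSeries.ext (funext fun n => ?_))
    simpa [ratRes_X_zpow_mul] using hc (-1 - n)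
  exists_forall_ge c := by
    refine ⟨-(algebraMap (RatFunc K) K⸨X⸩ c).order, fun n hn => ?_⟩
    rw [ratRes_X_zpow_mul]
    exact HahnSeries.coeff_eq_zero_of_lt_order (by omega)
  exists_frac c := by
    refine ⟨c.num, c.denom, c.denom_ne_zero, ?_⟩
    have hdenom : algebraMap (Polynomial K) (RatFunc K) c.denom ≠ 0 := by
      simpa using c.denom_ne_zero
    rw [aeval_ratFuncX, aeval_ratFuncX, mul_comm, ← eq_div_iff hdenom, RatFunc.num_div_denom]

end Residue

section Clifford

variable {K F : Type*} [Field K] [Field F] [Algebra K F] {N₀ : ℕ} {s χ χ₀ : ℤ}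
  {M U : ℕ → Submodule K F} {E : Submodule K F} [IsIntegrallyClosedIn K F]

section Tower

variable {C : Type*} [Field C] [Algebra K C] [Algebra C F] [IsScalarTower K C F] {t : C}
  {res : C →ₗ[K] K} (hres : IsResidue t res)
include hres

theorem finrank_dualModule_le [FiniteDimensional C F] {lam : F →ₗ[C] C} (hlam : lam ≠ 0)
    (hU : SheafFiltration (algebraMap C F t) N₀ s χ₀ U) (hR : RingFiltration U)
    (hspan : Submodule.span C (U N₀ : Set F) = ⊤) :
    (finrank K (dualModule (resForm res lam) (algebraMap C F t) U) : ℤ) ≤ 1 - χ₀ := by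
  have := finrank_le_one_of_le_one
    (globalSections_le_one hU hR hres.algebraMap_ne_zero le_rfl)
  have := finrank_dualModule hres hlam hU hspan le_rfl
  omega

theorem finrank_le_of_isResidue [FiniteDimensional C F]
    (hU : SheafFiltration (algebraMap C F t) N₀ s χ₀ U)
    (hR : RingFiltration U) (hspanU : Submodule.span C (U N₀ : Set F) = ⊤)
    (hM : SheafFiltration (algebraMap C F t) N₀ s χ M)
    (hUM : ∀ i j, U i * M j ≤ M (i + j)) {N : ℕ} (hN : N₀ ≤ N)
    (hspanM : Submodule.span C (M N : Set F) = ⊤) (hE : E ≠ ⊥)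
    (hEM : E ≤ globalSections (algebraMap C F t) M N) (hχ : χ < finrank K E) :
    2 * (finrank K E : ℤ) - χ ≤ 2 - χ₀ := by
  have hz : algebraMap C F t ≠ 0 := hres.algebraMap_ne_zero
  obtain ⟨lam, hlam⟩ : ∃ lam : F →ₗ[C] C, lam ≠ 0 := exists_ne 0
  have := hM.finiteDimensional N
  have := hU.finiteDimensional
  have := finiteDimensional_dualModule hres hlam hM hspanM
  have := finiteDimensional_dualModule hres hlam hU hspanU
  have : FiniteDimensional K (globalSections (algebraMap C F t) M N) :=
    Submodule.finiteDimensional_of_le inf_le_left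
  have : FiniteDimensional K E := Submodule.finiteDimensional_of_le hEM
  have hdualM := finrank_dualModule hres hlam hM hspanM hN
  have hdualU := finrank_dualModule_le hres hlam hU hR hspanU
  have hEdim := Submodule.finrank_mono hEM
  have hdualM0 : dualModule (resForm res lam) (algebraMap C F t) M ≠ ⊥ := by
    intro h0
    rw [h0, finrank_bot] at hdualM
    omega
  have hmul := (finrank_add_finrank_le_finrank_mul_add_one E _ hE hdualM0).trans
    (Nat.add_le_add_right (Submodule.finrank_mono ((mul_le_mul_left hEM _).trans
      (globalSections_mul_dualModule_le hz hUM N))) 1)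
  omega

end Tower

theorem clifford {z : F} (hs : 0 < s) (hU : SheafFiltration z N₀ s χ₀ U) (hR : RingFiltration U)
    (hM : SheafFiltration z N₀ s χ M) (hUM : ∀ i j, U i * M j ≤ M (i + j)) (hE : E ≠ ⊥) {n : ℕ}
    (hEM : E ≤ globalSections z M n) (hχ : χ < finrank K E) :
    2 * (finrank K E : ℤ) - χ ≤ 2 - χ₀ := by
  have htr : Transcendental K z := fun ha => hU.notMem_range_algebraMap hs
    (IsIntegrallyClosedIn.isIntegral_iff.1 ha.isIntegral)
  let φ : RatFunc K →ₐ[K] F := RatFunc.liftAlgHom (Polynomial.aeval z)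
    (nonZeroDivisors_le_comap_nonZeroDivisors_of_injective _ (transcendental_iff_injective.1 htr))
  algebraize [φ.toRingHom]
  have : IsScalarTower K (RatFunc K) F := IsScalarTower.of_algHom φ
  have hX : algebraMap (RatFunc K) F RatFunc.X = z := by
    change RatFunc.liftAlgHom _ _ _ = _
    simp [RatFunc.liftAlgHom_apply]
  rw [← hX] at hU hM hEM
  have := hU.finiteDimensional N₀
  have : FiniteDimensional (RatFunc K) F := hR.finiteDimensional (hU.subset_span le_rfl)
  have hMn : M n ≠ ⊥ := fun h0 => hE (le_bot_iff.1 ((hEM.trans inf_le_left).trans h0.le))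
  refine finrank_le_of_isResidue (isResidue_ratRes K) hU hR (hR.span_eq_top (hU.subset_span le_rfl))
    hM hUM (le_max_right n N₀) (hU.span_eq_top hR hM hUM hMn (le_max_right _ _)) hE
    (hEM.trans (hM.monotone_globalSections ?_ (le_max_left _ _))) hχ
  simp [RatFunc.X_ne_zero]

end Clifford

/-! ### Pencils -/

section PencilExact

open Polynomial TensorProduct

variable {k K : Type*} [Field k] [Field K] [Algebra k K]

/-- The map `V[X] → K ⊗ V` evaluating a polynomial with coefficients in `V` at `t`. -/
noncomputable def tensorEval (t : K) (V : Type*) [AddCommGroup V] [Module k V] :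
    (ℕ →₀ V) →ₗ[k] K ⊗[k] V :=
  Finsupp.lsum k fun n => TensorProduct.mk k K V (t ^ n)

section

variable {t : K} {V : Type*} [AddCommGroup V] [Module k V]

theorem tensorEval_single (n : ℕ) (v : V) :
    tensorEval (k := k) t V (Finsupp.single n v) = (t ^ n) ⊗ₜ v := by
  simp [tensorEval]

theorem tensorEval_injective (ht : Transcendental k t) :
    Function.Injective (tensorEval (k := k) t V) := by
  classical
  have hpow : LinearIndependent k fun n : ℕ => t ^ n := by
    simpa [Function.comp_def] using (basisMonomials k).linearIndependent.map'
      (aeval t).toLinearMap (LinearMap.ker_eq_bot.2 (transcendental_iff_injective.1 ht))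
  have heq : tensorEval t V = (Finsupp.linearCombination k fun n : ℕ => t ^ n).rTensor V ∘ₗ
      (TensorProduct.finsuppScalarLeft k V ℕ).symm.toLinearMap := by
    ext n v
    simp [tensorEval_single]
  rw [heq, LinearMap.coe_comp]
  exact (Module.Flat.rTensor_preserves_injective_linearMap _ hpow).comp (LinearEquiv.injective _)

theorem smul_mem_range_tensorEval {x : K ⊗[k] V} (hx : x ∈ (tensorEval (k := k) t V).range) :
    t • x ∈ (tensorEval (k := k) t V).range := by
  obtain ⟨f, rfl⟩ := hx
  refine ⟨Finsupp.lmapDomain V k (· + 1) f, ?_⟩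
  induction f using Finsupp.induction_linear with
  | zero => simp
  | add f g hf hg => simp only [map_add, smul_add, hf, hg]
  | single n v => simp [tensorEval_single, TensorProduct.smul_tmul', pow_succ']

theorem aeval_smul_mem_range_tensorEval (p : k[X]) {x : K ⊗[k] V}
    (hx : x ∈ (tensorEval (k := k) t V).range) :
    aeval t p • x ∈ (tensorEval (k := k) t V).range :=
  Polynomial.aeval_apply_smul_mem_of_le_comap' hx p t fun _ => smul_mem_range_tensorEval

theorem exists_aeval_smul_mem_range_tensorEval
    (hfrac : ∀ c : K, ∃ p q : k[X], q ≠ 0 ∧ aeval t q * c = aeval t p) (x : K ⊗[k] V) :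
    ∃ q : k[X], q ≠ 0 ∧ aeval t q • x ∈ (tensorEval (k := k) t V).range := by
  induction x with
  | zero => exact ⟨1, one_ne_zero, by simp⟩
  | tmul c v =>
    obtain ⟨p, q, hq, hpq⟩ := hfrac c
    refine ⟨q, hq, ?_⟩
    have : aeval t q • c ⊗ₜ[k] v = aeval t p • (1 : K) ⊗ₜ[k] v := by
      simp only [TensorProduct.smul_tmul', smul_eq_mul, hpq, mul_one]
    exact this ▸ aeval_smul_mem_range_tensorEval p ⟨Finsupp.single 0 v, by simp [tensorEval_single]⟩
  | add x y hx hy =>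
    obtain ⟨p, hp, hpx⟩ := hx
    obtain ⟨q, hq, hqy⟩ := hy
    refine ⟨q * p, mul_ne_zero hq hp, ?_⟩
    rw [smul_add, map_mul, mul_smul, mul_comm, mul_smul]
    exact add_mem (aeval_smul_mem_range_tensorEval q hpx) (aeval_smul_mem_range_tensorEval p hqy)

end

variable {F : Type*} [Field F] [Algebra k F]

/-- The inclusion `Y[X] → F[X]` of the polynomials with coefficients in the subspace `Y`. -/
noncomputable def coeffInclusion (Y : Submodule k F) : (ℕ →₀ Y) →ₗ[k] F[X] :=
  Finsupp.lsum k fun n => (monomial n : F →ₗ[F] F[X]).restrictScalars k ∘ₗ Y.subtype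

theorem coeffInclusion_single {Y : Submodule k F} (n : ℕ) (y : Y) :
    coeffInclusion Y (Finsupp.single n y) = monomial n (y : F) := by
  simp [coeffInclusion]

theorem coeff_coeffInclusion {Y : Submodule k F} (f : ℕ →₀ Y) (n : ℕ) :
    (coeffInclusion Y f).coeff n = f n := by
  induction f using Finsupp.induction_linear with
  | zero => simp
  | add f g hf hg => simp [hf, hg]
  | single m v =>
    simp only [coeffInclusion_single, coeff_monomial, Finsupp.single_apply]
    split_ifs <;> rfl

theorem coeffInclusion_injective (Y : Submodule k F) : Function.Injective (coeffInclusion Y) := by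
  intro f g hfg
  ext n
  rw [← coeff_coeffInclusion, hfg, coeff_coeffInclusion]

theorem exists_coeffInclusion_eq {Y : Submodule k F} {α : F[X]} (hα : ∀ n, α.coeff n ∈ Y) :
    ∃ f, coeffInclusion Y f = α := by
  refine ⟨Finsupp.ofSupportFinite (fun n => ⟨α.coeff n, hα n⟩)
    (α.support.finite_toSet.subset fun n hn => ?_), Polynomial.ext fun n => ?_⟩
  · simpa [Subtype.ext_iff] using hn
  · rw [coeff_coeffInclusion]
    rfl

variable {Y Z : Submodule k F} {z : F} {t : K}
  (hZY : Z ≤ Y) (hzZ : ∀ x ∈ Z, LinearMap.mulLeft k z x ∈ Y)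

variable (t) in
/-- The map `K ⊗ Z → K ⊗ Y` induced by multiplication by `t ⊗ 1 - 1 ⊗ z`. Its image consists of
the obvious `K`-linear relations in `F` between elements of `Y` when `z` is the image of `t`. -/
noncomputable def pencilRelations : K ⊗[k] Z →ₗ[K] K ⊗[k] Y :=
  t • (Submodule.inclusion hZY).baseChange K -
    ((LinearMap.mulLeft k z).restrict hzZ).baseChange K

theorem exists_tensorEval_eq_pencilRelations (t : K) (f : ℕ →₀ Z) : ∃ g : ℕ →₀ Y,
    coeffInclusion Y g = (X - C z) * coeffInclusion Z f ∧
      tensorEval t Y g = pencilRelations t hZY hzZ (tensorEval t Z f) := by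
  induction f using Finsupp.induction_linear with
  | zero => exact ⟨0, by simp⟩
  | add f₁ f₂ h₁ h₂ =>
    obtain ⟨g₁, hg₁, hg₁'⟩ := h₁
    obtain ⟨g₂, hg₂, hg₂'⟩ := h₂
    exact ⟨g₁ + g₂, by simp only [map_add, mul_add, hg₁, hg₂],
      by simp only [map_add, hg₁', hg₂']⟩
  | single n v =>
    refine ⟨Finsupp.single (n + 1) (Submodule.inclusion hZY v) +
      Finsupp.single n (-(LinearMap.mulLeft k z).restrict hzZ v), ?_, ?_⟩
    · rw [map_add, coeffInclusion_single, coeffInclusion_single, coeffInclusion_single, sub_mul,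
        X_mul_monomial]
      simp [sub_eq_add_neg]
    · rw [map_add, tensorEval_single, tensorEval_single, tensorEval_single, TensorProduct.tmul_neg,
        ← sub_eq_add_neg]
      simp [pencilRelations, TensorProduct.smul_tmul', pow_succ']

theorem pencilRelations_injective (ht : Transcendental k t)
    (hfrac : ∀ c : K, ∃ p q : k[X], q ≠ 0 ∧ aeval t q * c = aeval t p) :
    Function.Injective (pencilRelations t hZY hzZ) := by
  refine (injective_iff_map_eq_zero _).2 fun x hx => ?_
  obtain ⟨q, hq, f, hf⟩ := exists_aeval_smul_mem_range_tensorEval hfrac x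
  obtain ⟨g, hgf, hg⟩ := exists_tensorEval_eq_pencilRelations hZY hzZ t f
  have hg0 : g = 0 := tensorEval_injective ht (by rw [hg, hf, map_smul, hx, smul_zero, map_zero])
  have hf0 : f = 0 := coeffInclusion_injective Z <| by
    rw [hg0, map_zero] at hgf
    rw [(mul_eq_zero.1 hgf.symm).resolve_left (X_sub_C_ne_zero z), map_zero]
  rw [hf0, map_zero] at hf
  exact (smul_eq_zero.1 hf.symm).resolve_left (mt (transcendental_iff.1 ht q) hq)

variable [Algebra K F] [IsScalarTower k K F]

theorem liftBaseChange_tensorEval (f : ℕ →₀ Y) :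
    Y.subtype.liftBaseChange K (tensorEval t Y f) =
      (coeffInclusion Y f).eval (algebraMap K F t) := by
  induction f using Finsupp.induction_linear with
  | zero => simp
  | add f g hf hg => simp only [map_add, eval_add, hf, hg]
  | single n v => simp [tensorEval_single, coeffInclusion_single, Algebra.smul_def, mul_comm]

theorem exact_pencilRelations (hzZ : ∀ x ∈ Z, LinearMap.mulLeft k (algebraMap K F t) x ∈ Y)
    (ht : Transcendental k t)
    (hfrac : ∀ c : K, ∃ p q : k[X], q ≠ 0 ∧ aeval t q * c = aeval t p)
    (hpen : ∀ α : F[X], (∀ n, ((X - C (algebraMap K F t)) * α).coeff n ∈ Y) → ∀ n, α.coeff n ∈ Z) :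
    Function.Exact (pencilRelations t hZY hzZ) (Y.subtype.liftBaseChange K) := by
  refine fun y => ⟨fun hy => ?_, ?_⟩
  · obtain ⟨q, hq, f, hf⟩ := exists_aeval_smul_mem_range_tensorEval hfrac y
    have hroot : (coeffInclusion Y f).IsRoot (algebraMap K F t) := by
      rw [IsRoot.def, ← liftBaseChange_tensorEval, hf, map_smul, hy, smul_zero]
    obtain ⟨α, hα⟩ := dvd_iff_isRoot.2 hroot
    obtain ⟨g, rfl⟩ := exists_coeffInclusion_eq <| hpen α fun n => by
      rw [← hα, coeff_coeffInclusion]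
      exact (f n).2
    obtain ⟨f', hf', hψ⟩ := exists_tensorEval_eq_pencilRelations hZY hzZ t g
    rw [coeffInclusion_injective Y (hα.trans hf'.symm), hψ] at hf
    refine ⟨(aeval t q)⁻¹ • tensorEval t Z g, ?_⟩
    rw [map_smul, hf, inv_smul_smul₀ (mt (transcendental_iff.1 ht q) hq)]
  · rintro ⟨x, rfl⟩
    induction x with
    | zero => simp
    | add x y hx hy => rw [map_add, map_add, hx, hy, add_zero]
    | tmul c v =>
      simp [pencilRelations, TensorProduct.smul_tmul', Algebra.smul_def, mul_assoc, mul_left_comm]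

theorem finrank_span_add_finrank_eq [FiniteDimensional k Y] (hZY : Z ≤ Y)
    (hzZ : ∀ x ∈ Z, algebraMap K F t * x ∈ Y) (ht : Transcendental k t)
    (hfrac : ∀ c : K, ∃ p q : k[X], q ≠ 0 ∧ aeval t q * c = aeval t p)
    (hpen : ∀ α : F[X], (∀ n, ((X - C (algebraMap K F t)) * α).coeff n ∈ Y) → ∀ n, α.coeff n ∈ Z) :
    finrank K (Submodule.span K (Y : Set F)) + finrank k Z = finrank k Y := by
  have hdim := (Y.subtype.liftBaseChange K).finrank_range_add_finrank_ker
  rwa [(exact_pencilRelations hZY hzZ ht hfrac hpen).linearMap_ker_eq,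
    LinearMap.finrank_range_of_inj (pencilRelations_injective hZY hzZ ht hfrac),
    LinearMap.range_liftBaseChange, LinearMap.coe_range, Submodule.coe_subtype,
    Subtype.range_coe_subtype, finrank_baseChange, finrank_baseChange] at hdim

end PencilExact

section Saturated

open Polynomial

variable {k F : Type*} [Field k] [Field F] [Algebra k F] {z : F} {Y : ℕ → Submodule k F}
  (hmono : Monotone Y) (hzY : ∀ i, z • Y i ≤ Y (i + 1)) {α : F[X]} {i : ℕ}
  (h : ∀ n, ((X - C z) * α).coeff n ∈ Y i)
include hmono hzY h

theorem pow_mul_coeff_mem (n : ℕ) : z ^ (n + 1) * α.coeff n ∈ Y (i + n) := by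
  induction n with
  | zero => simpa [sub_mul] using neg_mem (h 0)
  | succ n ih =>
    have hn : α.coeff n - z * α.coeff (n + 1) ∈ Y i := by simpa [sub_mul] using h (n + 1)
    have heq : z ^ (n + 1 + 1) * α.coeff (n + 1) =
        z ^ (n + 1) * α.coeff n - z ^ (n + 1) * (α.coeff n - z * α.coeff (n + 1)) := by ring
    rw [heq]
    exact sub_mem (hmono (by lia) ih) (pow_mul_mem hzY (n + 1) hn)

theorem coeff_mem_of_natDegree_le (m : ℕ) {n : ℕ} (hn : α.natDegree ≤ n + m) :
    α.coeff n ∈ Y (i + m) := by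
  have hstep (n : ℕ) : α.coeff n - z * α.coeff (n + 1) ∈ Y i := by
    simpa [sub_mul] using h (n + 1)
  induction m generalizing n with
  | zero => simpa [coeff_eq_zero_of_natDegree_lt (Nat.lt_succ_of_le hn)] using hstep n
  | succ m ih =>
    rw [← sub_add_cancel (α.coeff n) (z * α.coeff (n + 1))]
    exact add_mem (hmono (by lia) (hstep n)) (smul_le_iff.1 (hzY _) _ (ih (by lia)))

end Saturated

section SimpleAdjoin

open Polynomial IntermediateField

variable {k F : Type*} [Field k] [Field F] [Algebra k F] {z : F}

theorem exists_aeval_gen_mul_eq (hz : Transcendental k z) (c : k⟮z⟯) :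
    ∃ p q : k[X], q ≠ 0 ∧ aeval (AdjoinSimple.gen k z) q * c = aeval (AdjoinSimple.gen k z) p := by
  obtain ⟨p, q, hpq⟩ := (mem_adjoin_simple_iff k (c : F)).1 c.2
  by_cases hq : q = 0
  · refine ⟨0, 1, one_ne_zero, ?_⟩
    have : c = 0 := by simpa [hq] using hpq
    simp [this]
  · refine ⟨p, q, hq, (algebraMap k⟮z⟯ F).injective ?_⟩
    rw [map_mul, ← aeval_algebraMap_apply, ← aeval_algebraMap_apply, AdjoinSimple.algebraMap_gen,
      IntermediateField.algebraMap_apply, hpq,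
      mul_div_cancel₀ _ (mt (transcendental_iff.1 hz q) hq)]

theorem transcendental_gen (hz : Transcendental k z) :
    Transcendental k (AdjoinSimple.gen k z) := by
  rwa [← transcendental_algebraMap_iff (FaithfulSMul.algebraMap_injective k⟮z⟯ F)]

end SimpleAdjoin

/-! ### Filtrations modelling sheaves on a surface -/

theorem SheafFiltration.shift {K F : Type*} [Field K] [Field F] [Algebra K F] {z : F} {N₀ : ℕ}
    {s χ : ℤ} {M : ℕ → Submodule K F} (h : SheafFiltration z N₀ s χ M) (n : ℕ) :
    SheafFiltration z N₀ s (s * n + χ) fun i => M (n + i) where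
  finiteDimensional _ := h.finiteDimensional _
  le_succ _ := h.le_succ _
  smul_le _ := h.smul_le _
  le_sup_smul i _ := h.le_sup_smul (n + i) (by omega)
  finrank_eq i _ := by
    rw [h.finrank_eq (n + i) (by omega)]
    push_cast
    ring

section Surface

open IntermediateField

variable {k F : Type*} [Field k] [Field F] [Algebra k F] {z : F}

theorem finrank_span_adjoin_add_finrank_eq (hz : Transcendental k z) {Y : ℕ → Submodule k F}
    (hmono : Monotone Y) (hzY : ∀ i, z • Y i ≤ Y (i + 1)) {j : ℕ} [FiniteDimensional k (Y (j + 1))]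
    (hsat : ∀ m, ∀ f ∈ Y (j + m), z ^ m * f ∈ Y (j + m) → f ∈ Y j) :
    finrank k⟮z⟯ (Submodule.span k⟮z⟯ (Y (j + 1) : Set F)) + finrank k (Y j) =
      finrank k (Y (j + 1)) := by
  refine finrank_span_add_finrank_eq (t := AdjoinSimple.gen k z) (hmono j.le_succ)
    (smul_le_iff.1 (hzY j)) (transcendental_gen hz) (exists_aeval_gen_mul_eq hz) fun α h n => ?_
  rw [AdjoinSimple.algebraMap_gen] at h
  have hcoeff := coeff_mem_of_natDegree_le hmono hzY h α.natDegree (Nat.le_add_left _ n)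
  have hpow := pow_mul_mem hzY α.natDegree (pow_mul_coeff_mem hmono hzY h n)
  refine hsat (α.natDegree + (n + 1)) _ (hmono (by lia) hcoeff) ?_
  rw [pow_add, mul_assoc]
  exact hmono (by lia) hpow

theorem span_mul_span_le (K : Type*) [Field K] [Algebra K F] {A B C : Submodule k F}
    (h : A * B ≤ C) :
    Submodule.span K (A : Set F) * Submodule.span K (B : Set F) ≤ Submodule.span K (C : Set F) := by
  rw [Submodule.span_mul_span]
  refine Submodule.span_mono ?_
  rintro _ ⟨a, ha, b, hb, rfl⟩
  exact h (Submodule.mul_mem_mul ha hb)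

theorem smul_span_le (K : Type*) [Field K] [Algebra K F] {A B : Submodule k F} (h : z • A ≤ B) :
    z • Submodule.span K (A : Set F) ≤ Submodule.span K (B : Set F) := by
  refine smul_le_iff.2 fun x hx => ?_
  have hle : Submodule.span K (A : Set F) ≤
      (Submodule.span K (B : Set F)).comap (LinearMap.mulLeft K z) :=
    Submodule.span_le.2 fun a ha => Submodule.subset_span (smul_le_iff.1 h a ha)
  exact hle hx

theorem RingFiltration.span {U : ℕ → Submodule k F} (hU : RingFiltration U)
    (K : IntermediateField k F) :
    RingFiltration fun i => Submodule.span K (U i : Set F) where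
  one_mem := Submodule.subset_span hU.one_mem
  mul_le i j := span_mul_span_le K (hU.mul_le i j)
  adjoin_eq_top := by
    refine eq_top_iff.2 fun x _ => ?_
    have hle : adjoin k (⋃ i, (U i : Set F)) ≤
        (adjoin K (⋃ i, (Submodule.span K (U i : Set F) : Set F))).restrictScalars k :=
      adjoin_le_iff.2 <| Set.iUnion_subset fun i u hu =>
        subset_adjoin K _ (Set.mem_iUnion_of_mem i (Submodule.subset_span hu))
    rw [hU.adjoin_eq_top] at hle
    exact hle mem_top

/-- A filtration of `k`-subspaces of `F` modelling the graded pieces of a torsion-free rank one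
sheaf on a surface of degree `s`, dehomogenized by a linear form: two further general linear forms
become `z₁` and `z₂`. From degree `N₀` on the three forms generate, the first two behave like a
regular sequence, and the first difference of the Hilbert function is that of a sheaf of Euler
characteristic `χ` on a curve of degree `s`. -/
structure SurfaceFiltration (z₁ z₂ : F) (N₀ : ℕ) (s χ : ℤ) (Y : ℕ → Submodule k F) : Prop where
  finiteDimensional : ∀ i, FiniteDimensional k (Y i)
  le_succ : ∀ i, Y i ≤ Y (i + 1)
  smul_le₁ : ∀ i, z₁ • Y i ≤ Y (i + 1)
  smul_le₂ : ∀ i, z₂ • Y i ≤ Y (i + 1)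
  mem_of_mul_mem : ∀ i, N₀ ≤ i → ∀ f ∈ Y (i + 1), z₁ * f ∈ Y (i + 1) → f ∈ Y i
  le_sup_smul : ∀ i, N₀ ≤ i → Y (i + 1) ≤ Y i ⊔ z₁ • Y i ⊔ z₂ • Y i
  finrank_succ : ∀ i, N₀ ≤ i → (finrank k (Y (i + 1)) : ℤ) = finrank k (Y i) + s * (i + 1) + χ

namespace SurfaceFiltration

variable {z₁ z₂ : F} {N₀ : ℕ} {s χ : ℤ} {Y : ℕ → Submodule k F}
  (h : SurfaceFiltration z₁ z₂ N₀ s χ Y)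
include h

theorem monotone : Monotone Y :=
  monotone_nat_of_le_succ h.le_succ

theorem mem_of_pow_mul_mem {j : ℕ} (hj : N₀ ≤ j) (m : ℕ) {f : F} (hf : f ∈ Y (j + m))
    (hzf : z₁ ^ m * f ∈ Y (j + m)) : f ∈ Y j :=
  GenusBound.mem_of_pow_mul_mem h.monotone h.mem_of_mul_mem h.smul_le₁ hj hf hzf

theorem sheafFiltration_span (hz : Transcendental k z₁) :
    SheafFiltration z₂ (N₀ + 1) s χ fun i => Submodule.span k⟮z₁⟯ (Y i : Set F) where
  finiteDimensional i :=
    have := h.finiteDimensional i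
    finiteDimensional_span (Y i)
  le_succ i := Submodule.span_mono (h.le_succ i)
  smul_le i := smul_span_le _ (h.smul_le₂ i)
  le_sup_smul i hi := by
    refine Submodule.span_le.2 fun x hx => ?_
    obtain ⟨_, hab, _, ⟨c, hc, rfl⟩, rfl⟩ :=
      Submodule.mem_sup.1 (h.le_sup_smul i (by omega) hx)
    obtain ⟨a, ha, _, ⟨b, hb, rfl⟩, rfl⟩ := Submodule.mem_sup.1 hab
    have hb' : z₁ * b ∈ Submodule.span k⟮z₁⟯ (Y i : Set F) :=
      Submodule.smul_mem _ (AdjoinSimple.gen k z₁) (Submodule.subset_span hb)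
    exact Submodule.add_mem_sup (add_mem (Submodule.subset_span ha) hb')
      (Submodule.smul_mem_pointwise_smul _ _ _ (Submodule.subset_span hc))
  finrank_eq i hi := by
    obtain ⟨j, rfl⟩ : ∃ j, i = j + 1 := ⟨i - 1, by omega⟩
    have := h.finiteDimensional (j + 1)
    have hpencil := finrank_span_adjoin_add_finrank_eq hz h.monotone h.smul_le₁ (j := j)
      fun m _ => h.mem_of_pow_mul_mem (by omega) m
    have hsucc := h.finrank_succ j (by omega)
    push_cast
    zify at hpencil
    linarith

theorem transcendental [IsIntegrallyClosedIn k F] (hs : 0 < s) : Transcendental k z₁ := by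
  intro halg
  obtain ⟨c, rfl⟩ := IsIntegrallyClosedIn.isIntegral_iff.1 halg.isIntegral
  obtain ⟨i, hi, hχ⟩ : ∃ i : ℕ, N₀ ≤ i ∧ -χ < i := ⟨N₀ + χ.natAbs + 1, by omega, by omega⟩
  have hle : Y (i + 1) ≤ Y i := fun f hf => h.mem_of_mul_mem i hi f hf <| by
    rw [← Algebra.smul_def]
    exact Submodule.smul_mem _ _ hf
  have := h.finiteDimensional i
  have hdim := Submodule.finrank_mono hle
  have hsucc := h.finrank_succ i hi
  zify at hdim
  nlinarith

end SurfaceFiltration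

section Saturation

variable {z₁ z₂ : F} {N₀ κ : ℕ} {s χ χ₀ : ℤ} {U Y : ℕ → Submodule k F}
  (hU : SurfaceFiltration z₁ z₂ N₀ s χ₀ U) (hR : RingFiltration U)
  (hY : SurfaceFiltration z₁ z₂ N₀ s χ Y)

include hU hR in
theorem div_le (i : ℕ) : Y (i + κ) / U κ ≤ Y (i + κ) := fun f hf => by
  simpa using Submodule.mem_div_iff_forall_mul_mem.1 hf 1
    (hU.monotone (Nat.zero_le κ) hR.one_mem)

include hU hR hY in
theorem finiteDimensional_div (i : ℕ) : FiniteDimensional k (Y (i + κ) / U κ :) :=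
  have := hY.finiteDimensional (i + κ)
  Submodule.finiteDimensional_of_le (div_le hU hR i)

include hU hR hY in
theorem finrank_span_div_add_finrank (hz : Transcendental k z₁) (hκ : N₀ ≤ κ) (i : ℕ) :
    finrank k⟮z₁⟯ (Submodule.span k⟮z₁⟯ ((Y (i + 1 + κ) / U κ :) : Set F)) +
      finrank k (Y (i + κ) / U κ :) = finrank k (Y (i + 1 + κ) / U κ :) := by
  have := finiteDimensional_div (κ := κ) hU hR hY (i + 1)
  refine finrank_span_adjoin_add_finrank_eq hz (Y := fun i => Y (i + κ) / U κ)
    (fun i j hij f hf => ?_) (fun i => smul_le_iff.2 fun f hf => ?_) fun m f hf hzf => ?_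
  all_goals
    rw [Submodule.mem_div_iff_forall_mul_mem] at *
    intro u hu
  · exact hY.monotone (by omega) (hf u hu)
  · rw [mul_assoc, show i + 1 + κ = i + κ + 1 by omega]
    exact smul_le_iff.1 (hY.smul_le₁ _) _ (hf u hu)
  · have hreindex : i + m + κ = i + κ + m := by omega
    refine hY.mem_of_pow_mul_mem (by omega) m (hreindex ▸ hf u hu) ?_
    rw [← mul_assoc, ← hreindex]
    exact hzf u hu

include hU hR hY in
theorem clifford_div [IsIntegrallyClosedIn k⟮z₁⟯ F] (hUY : ∀ i j, U i * Y j ≤ Y (i + j))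
    (hz : Transcendental k z₁) (hs : 0 < s) (i : ℕ) (h0 : Y (i + κ) / U κ ≠ ⊥)
    (hχ : s * i + χ <
      finrank k⟮z₁⟯ (Submodule.span k⟮z₁⟯ ((Y (i + κ) / U κ :) : Set F))) :
    2 * (finrank k⟮z₁⟯ (Submodule.span k⟮z₁⟯ ((Y (i + κ) / U κ :) : Set F)) : ℤ) - (s * i + χ) ≤
      2 - χ₀ := by
  refine clifford hs (hU.sheafFiltration_span hz) (hR.span _)
    ((hY.sheafFiltration_span hz).shift i) (fun a b => ?_) ?_ (n := κ) (le_inf ?_ ?_) hχ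
  · rw [show i + (a + b) = a + (i + b) by omega]
    exact span_mul_span_le _ (hUY a (i + b))
  · obtain ⟨f, hf, hf0⟩ := (Submodule.ne_bot_iff _).1 h0
    exact (Submodule.ne_bot_iff _).2 ⟨f, Submodule.subset_span hf, hf0⟩
  · exact Submodule.span_mono (div_le hU hR i)
  · have hz₂ : z₂ ≠ 0 := fun h0 => (hU.sheafFiltration_span hz).notMem_range_algebraMap hs
      (h0 ▸ zero_mem _)
    have hpow : z₂ ^ κ ∈ U κ := by simpa using pow_mul_mem hU.smul_le₂ κ hR.one_mem
    have hle : z₂ ^ κ • (Y (i + κ) / U κ) ≤ Y (i + κ) := smul_le_iff.2 fun f hf => by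
      rw [mul_comm]
      exact Submodule.mem_div_iff_forall_mul_mem.1 hf _ hpow
    exact fun f hf => (mem_inv_smul_iff (pow_ne_zero κ hz₂)).2
      (smul_le_iff.1 (smul_span_le _ hle) f hf)

include hU hY in
theorem smul_le_of_mem_div {κ : ℕ} (hκ : N₀ ≤ κ) {i : ℕ} {f : F} (hf : f ∈ Y (i + κ) / U κ)
    (j : ℕ) : f • U (κ + j) ≤ Y (i + κ + j) := by
  induction j with
  | zero => exact smul_le_iff.2 (Submodule.mem_div_iff_forall_mul_mem.1 hf)
  | succ j ih =>
    calc
      f • U (κ + (j + 1)) ≤ f • (U (κ + j) ⊔ z₁ • U (κ + j) ⊔ z₂ • U (κ + j)) :=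
        Submodule.map_mono (hU.le_sup_smul _ (Nat.le_add_right_of_le hκ))
      _ = f • U (κ + j) ⊔ z₁ • f • U (κ + j) ⊔ z₂ • f • U (κ + j) := by
        simp only [Submodule.smul_sup', smul_comm f]
      _ ≤ Y (i + κ + (j + 1)) :=
        sup_le (sup_le (ih.trans (hY.le_succ _))
          ((Submodule.map_mono ih).trans (hY.smul_le₁ _)))
          ((Submodule.map_mono ih).trans (hY.smul_le₂ _))

include hU hR in
/-- On a surface of degree `s ≤ 2r - 4` in `ℙ^r`, Clifford's inequality excludes that the
hyperplane series of the sectional curve is special. -/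
theorem le_add_of_finrank_eq [IsIntegrallyClosedIn k F] [IsIntegrallyClosedIn k⟮z₁⟯ F]
    (hs : 0 < s) {r : ℤ} (hr : (finrank k (U 1) : ℤ) = r + 1) (hsr : s ≤ 2 * r - 4) :
    r ≤ s + χ₀ := by
  have hz := hU.transcendental hs
  have := hU.finiteDimensional N₀
  have := finiteDimensional_div (κ := N₀) hU hR hU 1
  have h1 (i : ℕ) : (1 : F) ∈ U i := hU.monotone (Nat.zero_le i) hR.one_mem
  have hdim0 : finrank k (U (0 + N₀) / U N₀ :) ≤ 1 := finrank_le_one_of_le_one fun f hf =>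
    mem_one_of_smul_le ((Submodule.ne_bot_iff _).2 ⟨1, h1 N₀, one_ne_zero⟩)
      (smul_le_iff.2 (by simpa [Submodule.mem_div_iff_forall_mul_mem] using hf))
  have hle : U 1 ≤ U (1 + N₀) / U N₀ := Submodule.le_div_iff_mul_le.2 (hR.mul_le 1 N₀)
  have hdim1 := Submodule.finrank_mono hle
  have hpencil := finrank_span_div_add_finrank hU hR hU hz le_rfl 0
  have hcliff := clifford_div (κ := N₀) hU hR hU hR.mul_le hz hs 1
    ((Submodule.ne_bot_iff _).2 ⟨1, hle (h1 1), one_ne_zero⟩)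
  rw [zero_add] at hpencil
  zify at hpencil hdim0 hdim1
  push_cast at hcliff
  by_contra hcon
  have := hcliff (by linarith)
  linarith

include hU hR hY in
theorem finrank_div_succ_le [IsIntegrallyClosedIn k⟮z₁⟯ F] (hUY : ∀ i j, U i * Y j ≤ Y (i + j))
    (hz : Transcendental k z₁) (hs : 0 < s) {i : ℕ} {b : ℤ} (hb : 0 ≤ b) (hχb : s * (i + 1) + χ ≤ b)
    (hcliff : s * (i + 1) + χ + 2 - χ₀ ≤ 2 * b + 1) :
    (finrank k (Y (i + 1 + N₀) / U N₀ :) : ℤ) ≤ finrank k (Y (i + N₀) / U N₀ :) + b := by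
  have hpencil := finrank_span_div_add_finrank hU hR hY hz le_rfl i
  rcases eq_or_ne (Y (i + 1 + N₀) / U N₀) ⊥ with h0 | h0
  · rw [h0, finrank_bot]
    positivity
  · have hdiv := clifford_div hU hR hY hUY hz hs (i + 1) h0
    push_cast at hdiv
    by_contra! hcon
    have := hdiv (by omega)
    omega

end Saturation

theorem two_mul_le_of_succ_le {a : ℕ → ℤ} {s χ : ℤ} {n : ℕ}
    (h : ∀ i, n ≤ i → a (i + 1) ≤ a i + (s * (i + 1) + χ)) (j : ℕ) :
    2 * a (n + j) + s * (n * (n + 1)) + 2 * χ * n ≤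
      2 * a n + s * ((n + j : ℕ) * ((n + j : ℕ) + 1)) + 2 * χ * (n + j : ℕ) := by
  induction j with
  | zero => exact le_rfl
  | succ j ih =>
    have := h (n + j) (by omega)
    rw [← add_assoc]
    push_cast at *
    linarith

section Curve

variable {z₁ z₂ : F} {N₀ m : ℕ} {s d g π pa r ε : ℤ} {U V : ℕ → Submodule k F}
  (hU : SurfaceFiltration z₁ z₂ N₀ s (1 - π) U) (hR : RingFiltration U)
  (hV : SurfaceFiltration z₁ z₂ N₀ s (1 - π - d) V) (hUV : ∀ i j, U i * V j ≤ V (i + j))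
  (hdU : ∀ i : ℕ, N₀ ≤ i → 2 * (finrank k (U i) : ℤ) =
    s * (i * (i + 1)) + 2 * (1 - π) * i + 2 * (1 + pa))
  (hdV : ∀ i : ℕ, N₀ ≤ i → (finrank k (V i) : ℤ) = finrank k (U i) - (d * i + 1 - g))

include hU hV hdU hdV in
/-- Bezout: a surface section of degree `m` containing the curve has degree `s m ≥ d`. -/
theorem div_eq_bot_of_mul_lt (hm : s * m < d) : V (m + N₀) / U N₀ = ⊥ := by
  by_contra hne
  obtain ⟨f, hf, hf0⟩ := (Submodule.ne_bot_iff _).1 hne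
  have := hV.finiteDimensional
  obtain ⟨c, hc⟩ : ∃ c : ℤ, c = s * (m * (m + 1)) + 2 * (1 - π) * m - 2 * (1 - g) - 2 * d * m :=
    ⟨_, rfl⟩
  obtain ⟨T, hcT⟩ : ∃ T : ℕ, c < T := ⟨c.natAbs + 1, by omega⟩
  have hdim : finrank k (U (N₀ + T)) ≤ finrank k (V (m + N₀ + T)) := by
    rw [← finrank_smul hf0]
    exact Submodule.finrank_mono (smul_le_of_mem_div hU hV le_rfl hf T)
  have hT := hdU (N₀ + T) (by omega)
  have hmT := hdU (m + N₀ + T) (by omega)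
  have hmT' := hdV (m + N₀ + T) (by omega)
  zify at hdim
  push_cast at hT hmT hmT'
  have hpos : (N₀ + T : ℤ) * 1 ≤ (N₀ + T : ℤ) * (d - s * m) :=
    mul_le_mul_of_nonneg_left (by omega) (by positivity)
  linarith

include hU hR hV hUV hdU hdV in
/-- The dimension of the ideal of the curve in a large degree bounds `g` from above by the
dimension in degree `n`, provided the restrictions to the sectional curve beyond degree `n` are
nonspecial. -/
theorem add_le_two_mul_finrank_div [IsIntegrallyClosedIn k⟮z₁⟯ F] (hz : Transcendental k z₁)
    (hs : 0 < s) {n : ℕ} (hn : d + 2 * π ≤ s * (n + 1)) (hn' : d + π ≤ s * (n + 1) + 1) :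
    s * (n * (n + 1)) + 2 * (1 - π - d) * n + 2 * (pa + g) ≤
      2 * finrank k (V (n + N₀) / U N₀ :) := by
  have hgrow := two_mul_le_of_succ_le (a := fun i => (finrank k (V (i + N₀) / U N₀ :) : ℤ))
    (n := n) (s := s) (χ := 1 - π - d) (fun i hi => by
      have : s * (n + 1) ≤ s * (i + 1) := by gcongr
      exact finrank_div_succ_le hU hR hV hUV hz hs (by linarith) le_rfl (by linarith)) N₀
  have hle : V (n + N₀) ≤ V (n + N₀ + N₀) / U N₀ := Submodule.le_div_iff_mul_le.2 <| by
    rw [mul_comm]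
    exact (hUV N₀ _).trans_eq (congrArg V (add_comm _ _))
  have := finiteDimensional_div (κ := N₀) hU hR hV (n + N₀)
  have hdim := Submodule.finrank_mono hle
  have hdV' := hdV (n + N₀) (by omega)
  have hdU' := hdU (n + N₀) (by omega)
  zify at hdim
  push_cast at hgrow hdV' hdU'
  linarith

include hU hR hV hUV hdU hdV in
theorem genus_le_of_filtration [IsIntegrallyClosedIn k F] [IsIntegrallyClosedIn k⟮z₁⟯ F]
    (hd : d = s * m + ε + 1) (hε : 0 ≤ ε) (hεs : ε < s)
    (hr : (finrank k (U 1) : ℤ) = r + 1) (hsr : s ≤ 2 * r - 4) :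
    g ≤ (m : ℤ) * (m - 1) / 2 * s + m * (ε + π) - pa + max 0 ((2 * π - (s - 1 - ε)) / 2) := by
  have hs : 0 < s := by omega
  have hz := hU.transcendental hs
  have hsec := le_add_of_finrank_eq hU hR hs hr hsr
  have hbot := div_eq_bot_of_mul_lt (m := m) hU hV hdU hdV (by omega)
  have hdim : (finrank k (V (m + 1 + N₀) / U N₀ :) : ℤ) ≤
      max (s - ε - π) ((s - 1 - ε) / 2 + 1) := by
    have hχ : s * (m + 1) + (1 - π - d) = s - ε - π := by linarith
    have hsucc := finrank_div_succ_le hU hR hV hUV hz hs (i := m)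
      (b := max (s - ε - π) ((s - 1 - ε) / 2 + 1)) (by omega) (by omega) (by omega)
    rwa [hbot, finrank_bot, Nat.cast_zero, zero_add] at hsucc
  have hlower := add_le_two_mul_finrank_div hU hR hV hUV hdU hdV hz hs (n := m + 1)
    (by push_cast; linarith) (by push_cast; linarith)
  have heven : 2 * ((m : ℤ) * (m - 1) / 2) = m * (m - 1) :=
    Int.mul_ediv_cancel' (Int.even_mul_pred_self (m : ℤ)).two_dvd
  have hkey : 2 * g ≤ 2 * finrank k (V (m + 1 + N₀) / U N₀ :) - 2 * (s - ε - π) +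
      2 * ((m : ℤ) * (m - 1) / 2 * s + m * (ε + π) - pa) := by
    have hexpand : 2 * ((m : ℤ) * (m - 1) / 2 * s + m * (ε + π) - pa) =
      m * (m - 1) * s + 2 * m * (ε + π) - 2 * pa := by linear_combination s * heven
    rw [hexpand]
    rw [hd] at hlower
    push_cast at hlower
    linarith
  omega

end Curve

end Surface

/-! ### General members of a pencil -/

section Pencil

open IntermediateField Polynomial

theorem exists_algebraMap_eq_of_isIntegral_of_mul_eq {R L : Type*} [CommRing R] [IsDomain R]
    [IsIntegrallyClosed R] [Field L] [Algebra R L] [FaithfulSMul R L] {p q : R} {x : L}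
    (hq : q ≠ 0) (h : algebraMap R L q * x = algebraMap R L p) (hx : IsIntegral R x) :
    ∃ y, algebraMap R L y = x := by
  let _ := FractionRing.liftAlgebra R L
  have hq' : algebraMap R L q ≠ 0 := (FaithfulSMul.algebraMap_eq_zero_iff R L).not.2 hq
  have hx' : x = algebraMap (FractionRing R) L
      (algebraMap R (FractionRing R) p / algebraMap R (FractionRing R) q) := by
    rw [map_div₀, ← IsScalarTower.algebraMap_apply, ← IsScalarTower.algebraMap_apply, ← h,
      mul_div_cancel_left₀ _ hq']
  rw [hx', isIntegral_algebraMap_iff (algebraMap (FractionRing R) L).injective,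
    IsIntegrallyClosed.isIntegral_iff] at hx
  obtain ⟨y, hy⟩ := hx
  exact ⟨y, by rw [hx', ← hy, ← IsScalarTower.algebraMap_apply]⟩

variable {k F : Type*} [Field k] [Field F] [Algebra k F]

theorem isAlgebraic_aeval_of_isAlgebraic_adjoin_simple {θ f : F} (halg : IsAlgebraic k⟮θ⟯ f) :
    letI := (aeval θ : k[X] →ₐ[k] F).toRingHom.toAlgebra
    IsAlgebraic k[X] f := by
  let _ := (aeval θ : k[X] →ₐ[k] F).toRingHom.toAlgebra
  refine (isAlgebraic_adjoin_iff.1 halg).of_ringHom_of_comp_eq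
    ((aeval θ).codRestrict (Algebra.adjoin k {θ}) fun p => aeval_mem_adjoin_singleton k θ)
    (RingHom.id F) ?_ Function.injective_id (RingHom.ext fun _ => rfl)
  rintro ⟨x, hx⟩
  rw [Algebra.adjoin_singleton_eq_range_aeval] at hx
  obtain ⟨p, rfl⟩ := hx
  exact ⟨p, rfl⟩

-- A multiple `b(θ) f` with `b ∈ k[X]` is integral over `k[θ]`, hence over the integrally closed
-- ring `E[θ]`, so it is `Q(θ)` with `Q ∈ E[X]` integral over `k[X]`; then `Q ∈ k[X]`.
attribute [local instance] Polynomial.algebra in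
theorem mem_adjoin_of_isAlgebraic [IsIntegrallyClosedIn k F] {E : IntermediateField k F} {θ f : F}
    (hθ : Transcendental E θ) (hf : f ∈ E⟮θ⟯) (halg : IsAlgebraic k⟮θ⟯ f) : f ∈ k⟮θ⟯ := by
  let _ : Algebra k[X] F := (aeval θ : k[X] →ₐ[k] F).toRingHom.toAlgebra
  let _ : Algebra E[X] F := (aeval θ : E[X] →ₐ[E] F).toRingHom.toAlgebra
  have htower : IsScalarTower k[X] E[X] F :=
    .of_algebraMap_eq fun p => (aeval_map_algebraMap E θ p).symm
  have hinj : Function.Injective (algebraMap E[X] F) := transcendental_iff_injective.1 hθ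
  have hfaithful : FaithfulSMul E[X] F := (faithfulSMul_iff_algebraMap_injective _ _).2 hinj
  have hk : ∀ p : k[X], aeval θ p ∈ k⟮θ⟯ := fun p =>
    algebra_adjoin_le_adjoin k {θ} (aeval_mem_adjoin_singleton k θ)
  obtain ⟨b, hb, hbf⟩ :=
    (isAlgebraic_aeval_of_isAlgebraic_adjoin_simple halg).exists_integral_multiple
  obtain ⟨Q, hQ⟩ : ∃ Q : E[X], aeval θ Q = aeval θ b * f := by
    obtain ⟨p, q, rfl⟩ := (mem_adjoin_simple_iff E f).1 hf
    by_cases hq : aeval θ q = 0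
    · exact ⟨0, by rw [hq, div_zero, mul_zero, map_zero]⟩
    · refine exists_algebraMap_eq_of_isIntegral_of_mul_eq (q := q)
        (p := b.map (algebraMap k E) * p) (fun h => hq (by rw [h, map_zero])) ?_ hbf.tower_top
      change aeval θ q * (aeval θ b * (aeval θ p / aeval θ q)) = aeval θ (_ * p)
      rw [map_mul, aeval_map_algebraMap]
      field_simp
  have hQint : IsIntegral k[X] Q := (isIntegral_algebraMap_iff hinj).1 (hQ ▸ hbf)
  obtain ⟨P, rfl⟩ : Q ∈ lifts (algebraMap k E) :=
    (lifts_iff_coeff_lifts _).2 fun n => by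
      obtain ⟨c, hc⟩ := IsIntegrallyClosedIn.isIntegral_iff.1 ((hQint.coeff n).map E.val)
      exact ⟨c, Subtype.ext hc⟩
  have hb0 : aeval θ b ≠ 0 :=
    mt (transcendental_iff.1 (hθ.restrictScalars (algebraMap k E).injective) b) hb
  rw [coe_mapRingHom, aeval_map_algebraMap] at hQ
  rw [eq_div_of_mul_eq hb0 ((mul_comm _ _).trans hQ.symm)]
  exact div_mem (hk P) (hk b)

theorem adjoin_pair_le_of_mem {x y : F} {c c' : k} (hc : c ≠ c') {L : IntermediateField k F}
    (hL : x + algebraMap k F c * y ∈ L) (hL' : x + algebraMap k F c' * y ∈ L) :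
    adjoin k {x, y} ≤ L := by
  have hcc : algebraMap k F c - algebraMap k F c' ≠ 0 :=
    sub_ne_zero.2 ((algebraMap k F).injective.ne hc)
  have hy : y ∈ L := by
    have hdiv := div_mem (sub_mem hL hL') (sub_mem (L.algebraMap_mem c) (L.algebraMap_mem c'))
    rwa [add_sub_add_left_eq_sub, ← sub_mul, mul_div_cancel_left₀ _ hcc] at hdiv
  have hx : x ∈ L := by
    simpa only [add_sub_cancel_right] using sub_mem hL (mul_mem (L.algebraMap_mem c) hy)
  rw [adjoin_le_iff]
  rintro _ (rfl | rfl)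
  exacts [hx, hy]

theorem transcendental_algebraicClosure_of_ne {x y : F} [FiniteDimensional (adjoin k {x, y}) F]
    (htr : ∀ t : F, ¬ Algebra.IsAlgebraic k⟮t⟯ F) {c c' : k} (hc : c ≠ c') :
    Transcendental (algebraicClosure k⟮x + algebraMap k F c' * y⟯ F)
      (x + algebraMap k F c * y) := by
  intro halg
  set K := algebraicClosure k⟮x + algebraMap k F c' * y⟯ F
  have hK {w : F} (hw : IsAlgebraic K w) : IsAlgebraic k⟮x + algebraMap k F c' * y⟯ w :=
    hw.restrictScalars _
  have hle : adjoin k {x, y} ≤ K.restrictScalars k :=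
    adjoin_pair_le_of_mem hc (mem_algebraicClosure_iff.2 (hK halg))
      (mem_algebraicClosure_iff.2 (isAlgebraic_algebraMap (AdjoinSimple.gen k _)))
  exact htr _ ⟨fun w => hK
    ((Algebra.IsAlgebraic.isAlgebraic (R := adjoin k {x, y}) w).ringHom_of_comp_eq
      (inclusion hle) (RingHom.id F) (inclusion hle).injective rfl)⟩

-- Finitely many fields lie between `k(x, y)` and `F`, so for two members `θ` and `θ'` of the family
-- the relative algebraic closures `K` and `K'` of `k(θ)` and `k(θ')` generate the same field over
-- `k(x, y)`. Thus `K ⊆ K'(θ)`, and `k(θ)` is algebraically closed in `K'(θ)`.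
theorem exists_isIntegrallyClosedIn_adjoin_simple [IsIntegrallyClosedIn k F] [CharZero k] {x y : F}
    [FiniteDimensional (adjoin k {x, y}) F]
    (htr : ∀ t : F, ¬ Algebra.IsAlgebraic k⟮t⟯ F) {S : Set k} (hS : S.Infinite) :
    ∃ c ∈ S, IsIntegrallyClosedIn k⟮x + algebraMap k F c * y⟯ F := by
  set B := adjoin k {x, y}
  have : CharZero B := charZero_of_injective_algebraMap (algebraMap k B).injective
  have : Finite (IntermediateField B F) :=
    Field.finite_intermediateField_of_exists_primitive_element B F
      (Field.exists_primitive_element B F)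
  let θ (c : k) : F := x + algebraMap k F c * y
  let K (c : k) : IntermediateField k F := (algebraicClosure k⟮θ c⟯ F).restrictScalars k
  have hθK (c : k) : θ c ∈ K c :=
    mem_algebraicClosure_iff.2 (isAlgebraic_algebraMap (AdjoinSimple.gen k (θ c)))
  have := hS.to_subtype
  obtain ⟨⟨c, hcS⟩, c', hne, heq⟩ := Finite.exists_ne_map_eq_of_infinite fun c : S =>
    extendScalars (show B ≤ K c ⊔ B from le_sup_right)
  have hcc : c ≠ c' := fun h => hne (Subtype.ext h)
  have hKB : K c ⊔ B = K c' ⊔ B := by simpa using congrArg (restrictScalars k) heq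
  have htrans : Transcendental (K c') (θ c) := transcendental_algebraicClosure_of_ne htr hcc
  have hle : K c' ⊔ B ≤ (K c')⟮θ c⟯.restrictScalars k := by
    have hK : K c' ≤ (K c')⟮θ c⟯.restrictScalars k := fun w hw =>
      (K c')⟮θ c⟯.algebraMap_mem ⟨w, hw⟩
    exact sup_le hK (adjoin_pair_le_of_mem hcc (mem_adjoin_simple_self (K c') (θ c))
      (hK (hθK c')))
  refine ⟨c, hcS, isIntegrallyClosedIn_iff.2 ⟨Subtype.val_injective, fun {f} hf => ?_⟩⟩
  have hfK : f ∈ K c := mem_algebraicClosure_iff.2 hf.isAlgebraic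
  exact ⟨⟨f, mem_adjoin_of_isAlgebraic htrans (hle (hKB ▸ le_sup_left (a := K c) hfK))
    hf.isAlgebraic⟩, rfl⟩

theorem not_isAlgebraic_adjoin_simple {z w : F} (hz : Transcendental k z)
    (hw : Transcendental k⟮z⟯ w) (t : F) : ¬ Algebra.IsAlgebraic k⟮t⟯ F := by
  intro halg
  have : Algebra.Transcendental k k⟮z⟯ := ⟨_, transcendental_gen hz⟩
  have : Algebra.Transcendental k⟮z⟯ F := ⟨_, hw⟩
  have : Algebra.IsAlgebraic (Algebra.adjoin k {t}) F := isAlgebraic_adjoin_iff_top.1 halg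
  have htwo : (2 : Cardinal) ≤ 1 := calc
    (2 : Cardinal) = 1 + 1 := one_add_one_eq_two.symm
    _ ≤ Algebra.trdeg k k⟮z⟯ + Algebra.trdeg k⟮z⟯ F :=
      add_le_add (Cardinal.one_le_iff_pos.2 (trdeg_pos _ _))
        (Cardinal.one_le_iff_pos.2 (trdeg_pos _ _))
    _ = Algebra.trdeg k F := by simpa using lift_trdeg_add_eq k k⟮z⟯ F
    _ ≤ 1 := by simpa using Algebra.IsAlgebraic.trdeg_le_cardinalMk k ({t} : Set F)
  exact absurd htwo (by norm_num)

variable {z₁ z₂ : F} {N₀ : ℕ} {s χ : ℤ} {U : ℕ → Submodule k F}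

theorem SheafFiltration.transcendental (h : SheafFiltration z₁ N₀ s χ U) (hs : 0 < s) :
    Transcendental k z₁ := by
  intro halg
  have : FiniteDimensional k k⟮z₁⟯ := adjoin.finiteDimensional halg.isIntegral
  have hfin := h.finiteDimensional N₀
  have h' : SheafFiltration (algebraMap k⟮z₁⟯ F (AdjoinSimple.gen k z₁)) N₀ s χ U := by
    rwa [AdjoinSimple.algebraMap_gen]
  set T := (Submodule.span k⟮z₁⟯ (U N₀ : Set F)).restrictScalars k
  have : FiniteDimensional k T :=
    have := finiteDimensional_span (C := k⟮z₁⟯) (U N₀)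
    Module.Finite.trans (R := k) k⟮z₁⟯ (Submodule.span k⟮z₁⟯ (U N₀ : Set F))
  obtain ⟨i, hi, hiT⟩ : ∃ i : ℕ, N₀ ≤ i ∧ finrank k T - χ < i :=
    ⟨N₀ + χ.natAbs + 1 + finrank k T, by omega, by omega⟩
  have hle : finrank k (U i) ≤ finrank k T := Submodule.finrank_mono (h'.subset_span le_rfl i)
  have hrank := h.finrank_eq i hi
  zify at hle
  nlinarith

theorem SurfaceFiltration.finiteDimensional_adjoin_pair (h : SurfaceFiltration z₁ z₂ N₀ s χ U)
    (hU : RingFiltration U) : FiniteDimensional (adjoin k {z₁, z₂}) F := by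
  set B := adjoin k {z₁, z₂}
  have hz₁ : z₁ ∈ B := subset_adjoin k _ (by simp)
  have hz₂ : z₂ ∈ B := subset_adjoin k _ (by simp)
  have := h.finiteDimensional N₀
  have hspan (i : ℕ) : (U (N₀ + i) : Set F) ⊆ Submodule.span B (U N₀ : Set F) := by
    induction i with
    | zero => exact Submodule.subset_span
    | succ i ih =>
      intro x hx
      obtain ⟨w, hw, _, ⟨c, hc, rfl⟩, rfl⟩ :=
        Submodule.mem_sup.1 (h.le_sup_smul (N₀ + i) (by omega) hx)
      obtain ⟨a, ha, _, ⟨b, hb, rfl⟩, rfl⟩ := Submodule.mem_sup.1 hw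
      exact add_mem (add_mem (ih ha) (Submodule.smul_mem _ ⟨z₁, hz₁⟩ (ih hb)))
        (Submodule.smul_mem _ ⟨z₂, hz₂⟩ (ih hc))
  exact hU.finiteDimensional fun i x hx =>
    hspan i (h.monotone (Nat.le_add_left i N₀) hx)

theorem SurfaceFiltration.exists_isIntegrallyClosedIn_adjoin_simple [IsIntegrallyClosedIn k F]
    [CharZero k] (h : SurfaceFiltration z₁ z₂ N₀ s χ U) (hU : RingFiltration U) (hs : 0 < s)
    {S : Set k} (hS : S.Infinite) :
    ∃ c ∈ S, IsIntegrallyClosedIn k⟮z₁ + algebraMap k F c * z₂⟯ F := by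
  have := h.finiteDimensional_adjoin_pair hU
  have hz₁ := h.transcendental hs
  exact GenusBound.exists_isIntegrallyClosedIn_adjoin_simple
    (not_isAlgebraic_adjoin_simple hz₁ ((h.sheafFiltration_span hz₁).transcendental hs)) hS

end Pencil

theorem isIntegrallyClosedIn_of_isAlgClosed (k F : Type*) [Field k] [IsAlgClosed k] [Field F]
    [Algebra k F] : IsIntegrallyClosedIn k F :=
  isIntegrallyClosedIn_iff.2 ⟨(algebraMap k F).injective, fun hx =>
    minpoly.mem_range_of_degree_eq_one _ _
      (IsAlgClosed.degree_eq_one_of_irreducible k (minpoly.irreducible hx))⟩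

/-! ### Forms modulo a homogeneous ideal -/

section Avoidance

/-- `(I : l) / I` is annihilated by `l`, so all its associated primes contain `m` and a power of
`m` kills it. By the Artin–Rees lemma, `(I : l) ∩ mⁱ` lies in that power times `(I : l)`. -/
theorem exists_forall_mem_of_mul_mem {R : Type*} [CommRing R] [IsNoetherianRing R]
    {m I : Ideal R} {l : R} (hl : ∀ p ∈ associatedPrimes R (R ⧸ I), l ∈ p → m ≤ p) :
    ∃ N, ∀ i, N ≤ i → ∀ f ∈ m ^ i, l * f ∈ I → f ∈ I := by
  let J : Ideal R := Submodule.comap (LinearMap.mulLeft R l) I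
  let Q : Submodule R (R ⧸ I) := Submodule.map (Submodule.mkQ I) J
  have mem_annihilator_iff (a : R) : a ∈ annihilator R Q ↔ ∀ f ∈ J, a * f ∈ I := by
    simp only [Q, mem_annihilator, Subtype.forall, Submodule.mem_map, forall_exists_index, and_imp,
      forall_apply_eq_imp_iff₂, Subtype.ext_iff, Submodule.coe_smul, Submodule.mkQ_apply,
      ← Submodule.Quotient.mk_smul, smul_eq_mul, ZeroMemClass.coe_zero,
      Submodule.Quotient.mk_eq_zero]
  have hrad : m ≤ (annihilator R Q).radical := by
    rw [← Ideal.sInf_minimalPrimes]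
    refine le_sInf fun p hp => hl p ?_ (hp.1.2 ((mem_annihilator_iff l).2 fun f hf => hf))
    exact associatedPrimes.subset_of_injective (f := Q.subtype) Q.injective_subtype
      (Module.associatedPrimes.minimalPrimes_annihilator_subset_associatedPrimes R Q hp)
  obtain ⟨k, hk⟩ := Ideal.exists_pow_le_of_le_radical_of_fg hrad m.fg_of_isNoetherianRing
  obtain ⟨c, hc⟩ := Ideal.exists_pow_inf_eq_pow_smul m (J : Submodule R R)
  refine ⟨c + k, fun i hi f hf hlf => ?_⟩
  have hfJ : f ∈ m ^ (i - c) • (m ^ c • ⊤ ⊓ J : Submodule R R) := by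
    rw [← hc i (by omega)]
    exact ⟨by simpa using hf, hlf⟩
  have hle : m ^ (i - c) • (m ^ c • ⊤ ⊓ J : Submodule R R) ≤ I :=
    Submodule.smul_le.2 fun a ha b hb =>
      (mem_annihilator_iff a).1 (hk (Ideal.pow_le_pow_right (by omega) ha)) b hb.2
  exact hle hfJ

theorem infinite_setOf_forall_add_smul_notMem {k R : Type*} [Field k] [Infinite k] [CommRing R]
    [Algebra k R] {T : Set (Ideal R)} (hT : T.Finite) {x : R} (hx : ∀ p ∈ T, x ∉ p) (y : R) :
    {c : k | ∀ p ∈ T, x + c • y ∉ p}.Infinite := by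
  have hfinite : (⋃ p ∈ T, {c : k | x + c • y ∈ p}).Finite := by
    refine hT.biUnion fun p hp => Set.Subsingleton.finite fun c hc c' hc' => ?_
    by_contra hne
    have hsub : (c - c') • y ∈ p := by
      simpa only [add_sub_add_left_eq_sub, ← sub_smul] using p.sub_mem hc hc'
    have hy : y ∈ p := by
      simpa only [inv_smul_smul₀ (sub_ne_zero.2 hne)] using p.smul_of_tower_mem (c - c')⁻¹ hsub
    exact hx p hp ((add_mem_cancel_right (p.smul_of_tower_mem c hy)).1 hc)
  refine hfinite.infinite_compl.mono fun c hc p hp h => ?_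
  exact hc (Set.mem_biUnion hp h)

end Avoidance

section Forms

open MvPolynomial Filter

variable {n i : ℕ} {f l : MPoly n} {I : Ideal (MPoly n)}

/-- The space of forms of degree `i` in `n` variables. -/
abbrev forms (n i : ℕ) : Submodule ℂ (MPoly n) := homogeneousSubmodule (Fin n) ℂ i

instance finiteDimensional_forms (n i : ℕ) : FiniteDimensional ℂ (forms n i) :=
  (Submodule.fg_iff_finiteDimensional _).1 (homogeneousSubmodule_fg (Fin n) ℂ i)

/-- The forms of degree `i` in the ideal `I`. -/
noncomputable abbrev idealForms (I : Ideal (MPoly n)) (i : ℕ) : Submodule ℂ (MPoly n) :=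
  I.restrictScalars ℂ ⊓ forms n i

theorem finrank_forms_one (n : ℕ) : finrank ℂ (forms n 1) = n := by
  rw [forms, homogeneousSubmodule_one_eq_span_X, finrank_span_eq_card (linearIndependent_X _ _),
    Fintype.card_fin]

theorem mul_mem_forms_succ (hl : l ∈ forms n 1) (hf : f ∈ forms n i) : l * f ∈ forms n (i + 1) :=
  add_comm 1 i ▸ IsHomogeneous.mul hl hf

theorem mem_mId_pow_of_mem_forms (hf : f ∈ forms n i) : f ∈ mId n ^ i :=
  (mem_pow_idealOfVars_iff i f).2 fun _ hx => (IsHomogeneous.degree_eq_sum_deg_support hf hx).le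

/-- The associated primes of `I` that define a nonempty subscheme of projective space. A linear
form is regular modulo `I` in large degrees as soon as it avoids them. -/
def relevantPrimes (I : Ideal (MPoly n)) : Set (Ideal (MPoly n)) :=
  {p ∈ associatedPrimes (MPoly n) (MPoly n ⧸ I) | ¬ mId n ≤ p}

theorem finite_relevantPrimes (I : Ideal (MPoly n)) : (relevantPrimes I).Finite :=
  (associatedPrimes.finite (MPoly n) (MPoly n ⧸ I)).subset fun _ hp => hp.1

theorem eventually_mem_of_mul_mem (hl : ∀ p ∈ relevantPrimes I, l ∉ p) :
    ∀ᶠ i in atTop, ∀ f ∈ forms n i, l * f ∈ I → f ∈ I := by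
  obtain ⟨N, hN⟩ := exists_forall_mem_of_mul_mem (m := mId n) (I := I) (l := l)
    fun p hp hlp => by_contra fun h => hl p ⟨hp, h⟩ hlp
  filter_upwards [eventually_ge_atTop N] with i hi f hf
  exact hN i hi f (mem_mId_pow_of_mem_forms hf)

theorem exists_mem_forms_one_forall_notMem {T : Set (Ideal (MPoly n))} (hT : T.Finite)
    (h : ∀ p ∈ T, ¬ mId n ≤ p) : ∃ l ∈ forms n 1, ∀ p ∈ T, l ∉ p := by
  classical
  let φ (p : Ideal (MPoly n)) : Submodule ℂ (forms n 1) :=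
    (p.restrictScalars ℂ).comap (forms n 1).subtype
  have hφ : ⊤ ∉ hT.toFinset.image φ := by
    simp only [Finset.mem_image, Set.Finite.mem_toFinset, not_exists, not_and]
    refine fun p hp htop => h p hp (Ideal.span_le.2 ?_)
    rintro _ ⟨j, rfl⟩
    have hX : (⟨X j, isHomogeneous_X ℂ j⟩ : forms n 1) ∈ φ p := htop ▸ Submodule.mem_top
    exact hX
  obtain ⟨l, hl⟩ := (Set.ne_univ_iff_exists_notMem _).1 (Subspace.biUnion_ne_univ_of_top_notMem hφ)
  refine ⟨l, l.2, fun p hp hlp => hl ?_⟩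
  exact Set.mem_biUnion (Finset.mem_image_of_mem φ (hT.mem_toFinset.2 hp)) hlp

end Forms

section HilbertFunction

open MvPolynomial Filter

attribute [local instance] MvPolynomial.gradedAlgebra

variable {n i : ℕ} {f l : MPoly n} {I : Ideal (MPoly n)}

theorem isHomogIdeal_iff : IsHomogIdeal I ↔ I.IsHomogeneous (homogeneousSubmodule (Fin n) ℂ) :=
  ⟨fun h i f hf => decomposition.decompose'_apply f i ▸ h f hf i,
    fun h _ hf i => homogeneousComponent_mem_of_mem h hf i⟩

theorem isHomogIdeal_sup_span_singleton (hI : IsHomogIdeal I) (hl : l ∈ forms n 1) :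
    IsHomogIdeal (I ⊔ Ideal.span {l}) := by
  rw [isHomogIdeal_iff] at hI ⊢
  refine hI.sup (Ideal.homogeneous_span _ _ ?_)
  rintro _ rfl
  exact ⟨1, hl⟩

theorem homogeneousComponent_succ_mul (hl : l ∈ forms n 1) (f : MPoly n) (i : ℕ) :
    homogeneousComponent (i + 1) (l * f) = l * homogeneousComponent i f := by
  rw [add_comm, ← decomposition.decompose'_apply, ← decomposition.decompose'_apply]
  exact DirectSum.coe_decompose_mul_add_of_left_mem (homogeneousSubmodule (Fin n) ℂ) hl

theorem exists_eq_add_mul_of_mem_sup (hI : IsHomogIdeal I) (hl : l ∈ forms n 1)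
    (hf : f ∈ forms n (i + 1)) (h : f ∈ I ⊔ Ideal.span {l}) :
    ∃ a ∈ idealForms I (i + 1), ∃ b ∈ forms n i, f = a + l * b := by
  obtain ⟨a, ha, _, hlb, hab⟩ := Submodule.mem_sup.1 h
  obtain ⟨b, rfl⟩ := Ideal.mem_span_singleton.1 hlb
  refine ⟨homogeneousComponent (i + 1) a, ⟨hI a ha _, homogeneousComponent_mem _ _⟩,
    homogeneousComponent i b, homogeneousComponent_mem _ _, ?_⟩
  rw [← homogeneousComponent_succ_mul hl, ← map_add, hab, homogeneousComponent_eq_self hf]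

theorem finrank_map_add_finrank_ker_inf {k V W : Type*} [Field k] [AddCommGroup V] [Module k V]
    [AddCommGroup W] [Module k W] (φ : V →ₗ[k] W) (A : Submodule k V) [FiniteDimensional k A] :
    finrank k (A.map φ) + finrank k (LinearMap.ker φ ⊓ A : Submodule k V) = finrank k A := by
  rw [← LinearMap.finrank_range_add_finrank_ker (φ.domRestrict A), LinearMap.range_domRestrict,
    LinearMap.ker_domRestrict, inf_comm, ← Submodule.map_comap_subtype,
    (Submodule.equivMapOfInjective _ A.injective_subtype _).finrank_eq]

instance finiteDimensional_degQ (I : Ideal (MPoly n)) (i : ℕ) : FiniteDimensional ℂ (degQ I i) :=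
  inferInstanceAs (FiniteDimensional ℂ ((forms n i).map (Ideal.Quotient.mkₐ ℂ I).toLinearMap))

theorem finrank_degQ_add_finrank_idealForms (I : Ideal (MPoly n)) (i : ℕ) :
    finrank ℂ (degQ I i) + finrank ℂ (idealForms I i) = finrank ℂ (forms n i) := by
  have hker : LinearMap.ker (Ideal.Quotient.mkₐ ℂ I).toLinearMap = I.restrictScalars ℂ := by
    ext f
    exact Ideal.Quotient.eq_zero_iff_mem
  rw [← finrank_map_add_finrank_ker_inf (Ideal.Quotient.mkₐ ℂ I).toLinearMap (forms n i),
    hker]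
  rfl

theorem mem_of_finrank_degQ_eq_zero (h : finrank ℂ (degQ I i) = 0) (hf : f ∈ forms n i) :
    f ∈ I := by
  have hmem : Ideal.Quotient.mk I f ∈ degQ I i := ⟨f, hf, rfl⟩
  rw [Submodule.finrank_eq_zero.1 h, Submodule.mem_bot] at hmem
  exact Ideal.Quotient.eq_zero_iff_mem.1 hmem

theorem finrank_degQ_sup_add (hI : IsHomogIdeal I) (hl : l ∈ forms n 1)
    (hreg : ∀ f ∈ forms n i, l * f ∈ I → f ∈ I) :
    finrank ℂ (degQ (I ⊔ Ideal.span {l}) (i + 1)) + finrank ℂ (degQ I i) =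
      finrank ℂ (degQ I (i + 1)) := by
  let φ : MPoly n ⧸ I →ₗ[ℂ] MPoly n ⧸ I := LinearMap.mulLeft ℂ (Ideal.Quotient.mk I l)
  let π : MPoly n ⧸ I →ₗ[ℂ] MPoly n ⧸ (I ⊔ Ideal.span {l}) :=
    (Ideal.Quotient.factorₐ ℂ le_sup_left).toLinearMap
  have hπ : (degQ I (i + 1)).map π = degQ (I ⊔ Ideal.span {l}) (i + 1) := by
    rw [degQ, degQ, ← Submodule.map_comp]
    rfl
  have hker : LinearMap.ker π ⊓ degQ I (i + 1) = (degQ I i).map φ := by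
    ext x
    constructor
    · rintro ⟨hx, f, hf, rfl⟩
      obtain ⟨a, ⟨ha, -⟩, b, hb, rfl⟩ :=
        exists_eq_add_mul_of_mem_sup hI hl hf (Ideal.Quotient.eq_zero_iff_mem.1 hx)
      refine ⟨Ideal.Quotient.mk I b, ⟨b, hb, rfl⟩, ?_⟩
      simp [φ, Ideal.Quotient.eq_zero_iff_mem.2 ha]
    · rintro ⟨_, ⟨b, hb, rfl⟩, rfl⟩
      refine ⟨Ideal.Quotient.eq_zero_iff_mem.2 ?_, l * b, mul_mem_forms_succ hl hb, rfl⟩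
      exact Ideal.mem_sup_right (Ideal.mul_mem_right _ _ (Ideal.mem_span_singleton_self l))
  have hφ : LinearMap.ker φ ⊓ degQ I i = ⊥ := by
    rw [eq_bot_iff]
    rintro _ ⟨hx, f, hf, rfl⟩
    exact Ideal.Quotient.eq_zero_iff_mem.2 (hreg f hf (Ideal.Quotient.eq_zero_iff_mem.1 hx))
  have e₁ := finrank_map_add_finrank_ker_inf π (degQ I (i + 1))
  have e₂ := finrank_map_add_finrank_ker_inf φ (degQ I i)
  rw [hφ, finrank_bot, add_zero] at e₂
  rwa [hπ, hker, e₂] at e₁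

theorem eventually_finrank_degQ_sup (hI : IsHomogIdeal I) (hl : l ∈ forms n 1)
    (hreg : ∀ᶠ i in atTop, ∀ f ∈ forms n i, l * f ∈ I → f ∈ I) {p : ℤ → ℤ}
    (hp : ∀ᶠ i : ℕ in atTop, (finrank ℂ (degQ I i) : ℤ) = p i) :
    ∀ᶠ i : ℕ in atTop, (finrank ℂ (degQ (I ⊔ Ideal.span {l}) i) : ℤ) = p i - p (i - 1) := by
  rw [← map_add_atTop_eq_nat 1, eventually_map]
  filter_upwards [hreg, hp, (tendsto_add_atTop_nat 1).eventually hp] with i hreg hi hi'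
  rw [← hi', Nat.cast_succ, add_sub_cancel_right, ← hi, ← finrank_degQ_sup_add hI hl hreg,
    Nat.cast_add, add_sub_cancel_right]

theorem hilbZ_natCast (I : Ideal (MPoly n)) (i : ℕ) : hilbZ I i = finrank ℂ (degQ I i) := by
  rw [hilbZ, hilbNat, degQZ, if_pos i.cast_nonneg, Int.toNat_natCast]

theorem eventually_finrank_degQ_of_curveInv {d g : ℤ} (h : CurveInv I d g) :
    ∀ᶠ i : ℕ in atTop, (finrank ℂ (degQ I i) : ℤ) = d * i + 1 - g := by
  simp only [← hilbZ_natCast]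
  exact tendsto_natCast_atTop_atTop.eventually (eventually_atTop.2 h)

theorem eventually_finrank_degQ_of_surfInv {s π pa : ℤ} (h : SurfInv I s π pa) :
    ∀ᶠ i : ℕ in atTop,
      (finrank ℂ (degQ I i) : ℤ) = s * ((i : ℤ) * (i + 1) / 2) + (1 - π) * i + 1 + pa := by
  simp only [← hilbZ_natCast]
  exact tendsto_natCast_atTop_atTop.eventually (eventually_atTop.2 h)

end HilbertFunction

/-! ### Dehomogenization -/

section Dehomogenization

open MvPolynomial

variable {n i : ℕ} {F : Type*} [Field F] [Algebra ℂ F]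

theorem map_eq_pow_mul_aeval_div {σ R K : Type*} [CommRing R] [Field K] [Algebra R K]
    (q : MvPolynomial σ R →ₐ[R] K) {c : K} (hc : c ≠ 0) {f : MvPolynomial σ R} {i : ℕ}
    (hf : f.IsHomogeneous i) : q f = c ^ i * aeval (fun j => q (X j) / c) f := by
  conv_lhs => rw [aeval_unique q]
  rw [aeval_def, aeval_def, eval₂_eq, eval₂_eq, Finset.mul_sum]
  refine Finset.sum_congr rfl fun e he => ?_
  rw [hf.degree_eq_sum_deg_support he, mul_left_comm,
    ← Finset.prod_pow_eq_pow_sum, ← Finset.prod_mul_distrib]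
  simp only [← mul_pow, mul_div_cancel₀ _ hc, Function.comp_apply]

/-- Division of forms of degree `i` by `l₀ ^ i`, for forms on `V(I)` and with values in its
function field `F`. -/
structure Dehomogenization (I : Ideal (MPoly n)) (l₀ : MPoly n) (ev : MPoly n →ₐ[ℂ] F) :
    Prop where
  map_eq_one : ev l₀ = 1
  map_eq_zero_iff : ∀ i, ∀ f ∈ forms n i, ev f = 0 ↔ f ∈ I
  exists_eq_div : ∀ x : F, ∃ a b, x = ev a / ev b

/-- The quotients `f / l₀` of linear forms generate a quotient of the polynomial ring by a prime
ideal, whose residue field serves as the function field. -/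
theorem exists_dehomogenization {I : Ideal (MPoly n)} [I.IsPrime] {l₀ : MPoly n}
    (hl₀ : l₀ ∈ forms n 1) (hI : l₀ ∉ I) :
    ∃ (F : Type) (_ : Field F) (_ : Algebra ℂ F) (ev : MPoly n →ₐ[ℂ] F),
      Dehomogenization I l₀ ev := by
  let q : MPoly n →ₐ[ℂ] I.ResidueField := IsScalarTower.toAlgHom ℂ (MPoly n) I.ResidueField
  have hq (f : MPoly n) : q f = 0 ↔ f ∈ I := Ideal.algebraMap_residueField_eq_zero
  have hl : q l₀ ≠ 0 := mt (hq l₀).1 hI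
  let φ : MPoly n →ₐ[ℂ] I.ResidueField := aeval fun j => q (X j) / q l₀
  let P : Ideal (MPoly n) := RingHom.ker φ
  have : P.IsPrime := RingHom.ker_isPrime _
  let ev : MPoly n →ₐ[ℂ] P.ResidueField := IsScalarTower.toAlgHom ℂ (MPoly n) P.ResidueField
  have hev (f : MPoly n) : ev f = 0 ↔ φ f = 0 := Ideal.algebraMap_residueField_eq_zero
  have hφ : φ l₀ = 1 := by
    have h := map_eq_pow_mul_aeval_div q hl hl₀
    rw [pow_one] at h
    exact (mul_eq_left₀ hl).1 h.symm
  refine ⟨P.ResidueField, inferInstance, inferInstance, ev, ⟨?_, fun i f hf => ?_, fun x => ?_⟩⟩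
  · rw [← sub_eq_zero, ← map_one ev, ← map_sub, hev, map_sub, hφ, map_one, sub_self]
  · rw [hev, ← hq, map_eq_pow_mul_aeval_div q hl hf, mul_eq_zero_iff_left (pow_ne_zero i hl)]
  · obtain ⟨a, b, -, rfl⟩ := IsFractionRing.div_surjective (A := MPoly n ⧸ P) x
    obtain ⟨a, rfl⟩ := Ideal.Quotient.mk_surjective a
    obtain ⟨b, rfl⟩ := Ideal.Quotient.mk_surjective b
    exact ⟨a, b, rfl⟩

/-- The dehomogenized forms of degree `i` in the ideal `J`; for `J = ⊤`, all forms of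
degree `i`. -/
noncomputable def dehom (ev : MPoly n →ₐ[ℂ] F) (J : Ideal (MPoly n)) (i : ℕ) : Submodule ℂ F :=
  (idealForms J i).map ev.toLinearMap

variable {ev : MPoly n →ₐ[ℂ] F} {I J : Ideal (MPoly n)} {l₀ l₁ l₂ : MPoly n}

theorem finrank_degQ_top (n i : ℕ) : finrank ℂ (degQ (⊤ : Ideal (MPoly n)) i) = 0 := by
  have h := finrank_degQ_add_finrank_idealForms (⊤ : Ideal (MPoly n)) i
  rwa [idealForms, Submodule.restrictScalars_top, top_inf_eq, Nat.add_eq_right] at h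

theorem dehom_mul_dehom_le (ev : MPoly n →ₐ[ℂ] F) (I J : Ideal (MPoly n)) (i j : ℕ) :
    dehom ev I i * dehom ev J j ≤ dehom ev J (i + j) := by
  rw [Submodule.mul_le]
  rintro _ ⟨a, ⟨-, ha⟩, rfl⟩ _ ⟨b, ⟨hb, hb'⟩, rfl⟩
  exact ⟨a * b, ⟨J.mul_mem_left a hb, IsHomogeneous.mul ha hb'⟩, map_mul ev a b⟩

theorem mul_mem_dehom_succ {l : MPoly n} (hl : l ∈ forms n 1) {x : F} (hx : x ∈ dehom ev J i) :
    ev l * x ∈ dehom ev J (i + 1) := by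
  obtain ⟨f, ⟨hf, hf'⟩, rfl⟩ := hx
  exact ⟨l * f, ⟨J.mul_mem_left l hf, mul_mem_forms_succ hl hf'⟩, map_mul ev l f⟩

namespace Dehomogenization

theorem sub_mem_of_map_eq (h : Dehomogenization I l₀ ev) {f g : MPoly n} (hf : f ∈ forms n i)
    (hg : g ∈ forms n i) (he : ev f = ev g) : f - g ∈ I :=
  (h.map_eq_zero_iff i _ (sub_mem hf hg)).1 (by rw [map_sub, he, sub_self])

theorem finrank_dehom_add_finrank_degQ (h : Dehomogenization I l₀ ev) (hIJ : I ≤ J) (i : ℕ) :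
    finrank ℂ (dehom ev J i) + finrank ℂ (degQ J i) = finrank ℂ (degQ I i) := by
  have hker : LinearMap.ker ev.toLinearMap ⊓ idealForms J i = idealForms I i := by
    ext f
    exact ⟨fun ⟨h₁, _, h₂⟩ => ⟨(h.map_eq_zero_iff i f h₂).1 h₁, h₂⟩,
      fun ⟨h₁, h₂⟩ => ⟨(h.map_eq_zero_iff i f h₂).2 h₁, hIJ h₁, h₂⟩⟩
  have e₁ : finrank ℂ (dehom ev J i) + _ = _ :=
    finrank_map_add_finrank_ker_inf ev.toLinearMap (idealForms J i)
  have e₂ := finrank_degQ_add_finrank_idealForms I i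
  have e₃ := finrank_degQ_add_finrank_idealForms J i
  rw [hker] at e₁
  omega

theorem finrank_dehom_top (h : Dehomogenization I l₀ ev) (i : ℕ) :
    finrank ℂ (dehom ev ⊤ i) = finrank ℂ (degQ I i) := by
  rw [← h.finrank_dehom_add_finrank_degQ le_top, finrank_degQ_top, add_zero]

theorem ringFiltration (h : Dehomogenization I l₀ ev) : RingFiltration (dehom ev ⊤) where
  one_mem := ⟨1, ⟨trivial, isHomogeneous_one _ _⟩, map_one ev⟩
  mul_le := dehom_mul_dehom_le ev ⊤ ⊤
  adjoin_eq_top := by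
    have key (f : MPoly n) : ev f ∈ IntermediateField.adjoin ℂ (⋃ i, (dehom ev ⊤ i : Set F)) := by
      rw [← sum_homogeneousComponent f, map_sum]
      refine sum_mem fun i _ => IntermediateField.subset_adjoin _ _ (Set.mem_iUnion.2 ⟨i, ?_⟩)
      exact ⟨_, ⟨trivial, homogeneousComponent_mem i f⟩, rfl⟩
    refine eq_top_iff.2 fun x _ => ?_
    obtain ⟨a, b, rfl⟩ := h.exists_eq_div x
    exact div_mem (key a) (key b)

theorem mem_dehom_of_mul_mem (h : Dehomogenization I l₀ ev) (hI : IsHomogIdeal I) (hIJ : I ≤ J)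
    (hl₀ : l₀ ∈ forms n 1) (hl₁ : l₁ ∈ forms n 1) (hJ : ∀ f, l₀ * f ∈ J → f ∈ J)
    (hreg : ∀ f ∈ forms n (i + 1), l₁ * f ∈ I ⊔ Ideal.span {l₀} → f ∈ I ⊔ Ideal.span {l₀}) {x : F}
    (hx : x ∈ dehom ev J (i + 1)) (hx' : ev l₁ * x ∈ dehom ev J (i + 1)) : x ∈ dehom ev J i := by
  obtain ⟨a, ⟨haJ, ha⟩, rfl⟩ := hx
  obtain ⟨b, ⟨-, hb⟩, hab : ev b = ev l₁ * ev a⟩ := hx'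
  have hsub : l₁ * a - l₀ * b ∈ I := h.sub_mem_of_map_eq (mul_mem_forms_succ hl₁ ha)
    (mul_mem_forms_succ hl₀ hb) (by rw [map_mul, map_mul, h.map_eq_one, hab, one_mul])
  have hmul : l₁ * a ∈ I ⊔ Ideal.span {l₀} := Submodule.mem_sup.2
    ⟨_, hsub, l₀ * b, Ideal.mem_span_singleton.2 (dvd_mul_right _ _), sub_add_cancel _ _⟩
  obtain ⟨t, ⟨ht, ht'⟩, c, hc, rfl⟩ := exists_eq_add_mul_of_mem_sup hI hl₀ ha (hreg a ha hmul)
  refine ⟨c, ⟨hJ c ((J.add_mem_iff_right (hIJ ht)).1 haJ), hc⟩, ?_⟩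
  change ev c = ev (t + l₀ * c)
  rw [map_add, map_mul, h.map_eq_one, (h.map_eq_zero_iff _ t ht').2 ht, one_mul, zero_add]

theorem surfaceFiltration (h : Dehomogenization I l₀ ev) (hI : IsHomogIdeal I) (hIJ : I ≤ J)
    (hl₀ : l₀ ∈ forms n 1) (hl₁ : l₁ ∈ forms n 1) (hl₂ : l₂ ∈ forms n 1)
    (hJ : ∀ f, l₀ * f ∈ J → f ∈ J) {N : ℕ}
    (hreg : ∀ i, N ≤ i → ∀ f ∈ forms n i,
      l₁ * f ∈ I ⊔ Ideal.span {l₀} → f ∈ I ⊔ Ideal.span {l₀})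
    (hgen : ∀ i, N ≤ i → ∀ f ∈ idealForms J (i + 1), ∃ t ∈ idealForms I (i + 1),
      ∃ a ∈ idealForms J i, ∃ b ∈ idealForms J i, ∃ c ∈ idealForms J i,
        f = t + l₀ * a + l₁ * b + l₂ * c)
    {s χ : ℤ} (hdim : ∀ i : ℕ, N ≤ i →
      (finrank ℂ (dehom ev J (i + 1)) : ℤ) = finrank ℂ (dehom ev J i) + s * (i + 1) + χ) :
    SurfaceFiltration (ev l₁) (ev l₂) N s χ (dehom ev J) where
  finiteDimensional i := Module.Finite.map (idealForms J i) ev.toLinearMap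
  le_succ i x hx := by simpa only [h.map_eq_one, one_mul] using mul_mem_dehom_succ hl₀ hx
  smul_le₁ i := smul_le_iff.2 fun x hx => mul_mem_dehom_succ hl₁ hx
  smul_le₂ i := smul_le_iff.2 fun x hx => mul_mem_dehom_succ hl₂ hx
  mem_of_mul_mem i hi x hx hx' :=
    h.mem_dehom_of_mul_mem hI hIJ hl₀ hl₁ hJ (hreg (i + 1) (by omega)) hx hx'
  le_sup_smul i hi := by
    rintro _ ⟨f, hf, rfl⟩
    obtain ⟨t, ⟨ht, ht'⟩, a, ha, b, hb, c, hc, rfl⟩ := hgen i hi f hf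
    have hev : ev (t + l₀ * a + l₁ * b + l₂ * c) = ev a + ev l₁ * ev b + ev l₂ * ev c := by
      simp only [map_add, map_mul, h.map_eq_one, (h.map_eq_zero_iff _ t ht').2 ht, one_mul,
        zero_add]
    refine Submodule.mem_sup.2 ⟨_, Submodule.mem_sup.2 ⟨ev a, ⟨a, ha, rfl⟩, _, ?_, rfl⟩, _, ?_,
      hev.symm⟩
    · exact Submodule.smul_mem_pointwise_smul (ev b) (ev l₁) _ ⟨b, hb, rfl⟩
    · exact Submodule.smul_mem_pointwise_smul (ev c) (ev l₂) _ ⟨c, hc, rfl⟩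
  finrank_succ := hdim

end Dehomogenization

end Dehomogenization

/-! ### Adapted nets -/

section AdaptedNet

open MvPolynomial Filter IntermediateField

variable {n i N : ℕ} {f l l₀ l₁ l₂ : MPoly n} {I J : Ideal (MPoly n)} {s π pa d g : ℤ}

theorem eventually_mem_sup_of_finrank_degQ_eq (hI : IsHomogIdeal I) (hl : l ∈ forms n 1)
    (hreg : ∀ᶠ i in atTop, ∀ f ∈ forms n i, l * f ∈ I → f ∈ I)
    (hd : ∀ᶠ i in atTop, (finrank ℂ (degQ I i) : ℤ) = d) :
    ∀ᶠ i in atTop, ∀ f ∈ forms n i, f ∈ I ⊔ Ideal.span {l} := by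
  filter_upwards [eventually_finrank_degQ_sup hI hl hreg (p := fun _ => d) hd] with i hi f
  exact mem_of_finrank_degQ_eq_zero (by rwa [sub_self, Nat.cast_eq_zero] at hi)

theorem eventually_finrank_degQ_sup_of_curveInv (hI : IsHomogIdeal I) (hl : l ∈ forms n 1)
    (hreg : ∀ f, l * f ∈ I → f ∈ I) (h : CurveInv I d g) :
    ∀ᶠ i : ℕ in atTop, (finrank ℂ (degQ (I ⊔ Ideal.span {l}) i) : ℤ) = d := by
  filter_upwards [eventually_finrank_degQ_sup hI hl (.of_forall fun _ f _ => hreg f)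
    (p := fun t => d * t + 1 - g) (eventually_finrank_degQ_of_curveInv h)] with i hi
  rw [hi]
  ring

theorem eventually_finrank_degQ_sup_of_surfInv (hI : IsHomogIdeal I) (hl : l ∈ forms n 1)
    (hreg : ∀ f, l * f ∈ I → f ∈ I) (h : SurfInv I s π pa) :
    ∀ᶠ i : ℕ in atTop,
      (finrank ℂ (degQ (I ⊔ Ideal.span {l}) i) : ℤ) = s * i + (1 - π) := by
  filter_upwards [eventually_finrank_degQ_sup hI hl (.of_forall fun _ f _ => hreg f)
    (p := fun t => s * (t * (t + 1) / 2) + (1 - π) * t + 1 + pa)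
    (eventually_finrank_degQ_of_surfInv h)] with i hi
  have hdiff : (i : ℤ) * (i + 1) / 2 = (i - 1) * (i - 1 + 1) / 2 + i := by
    rw [← Int.add_mul_ediv_right _ _ two_ne_zero]
    ring_nf
  rw [hi, hdiff]
  ring

/-- A net of linear forms adapted, from degree `N` on, to the ideal `I` of a surface and the ideal
`J` of a curve on it: `l₁` is regular modulo `(I, l₀)` and `(J, l₀)`, the net has no base points on
the surface, and `l₀, l₁` have no common zero on the curve. -/
structure AdaptedNet (I J : Ideal (MPoly n)) (l₀ l₁ l₂ : MPoly n) (N : ℕ) : Prop where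
  pos : 0 < N
  mem₀ : l₀ ∈ forms n 1
  mem₁ : l₁ ∈ forms n 1
  mem₂ : l₂ ∈ forms n 1
  mem_of_mul_mem_left : ∀ i, N ≤ i → ∀ f ∈ forms n i,
    l₁ * f ∈ I ⊔ Ideal.span {l₀} → f ∈ I ⊔ Ideal.span {l₀}
  mem_of_mul_mem_right : ∀ i, N ≤ i → ∀ f ∈ forms n i,
    l₁ * f ∈ J ⊔ Ideal.span {l₀} → f ∈ J ⊔ Ideal.span {l₀}
  mem_sup_left : ∀ i, N ≤ i → ∀ f ∈ forms n i,
    f ∈ I ⊔ Ideal.span {l₀} ⊔ Ideal.span {l₁} ⊔ Ideal.span {l₂}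
  mem_sup_right : ∀ i, N ≤ i → ∀ f ∈ forms n i, f ∈ J ⊔ Ideal.span {l₀} ⊔ Ideal.span {l₁}

theorem exists_eventually_adaptedNet (hI : IsHomogIdeal I) (hJ : IsHomogIdeal J)
    (hl₀ : l₀ ∈ forms n 1) (hregI : ∀ f, l₀ * f ∈ I → f ∈ I) (hregJ : ∀ f, l₀ * f ∈ J → f ∈ J)
    (hS : SurfInv I s π pa) (hC : CurveInv J d g) (hl₁ : l₁ ∈ forms n 1)
    (h : ∀ p ∈ relevantPrimes (I ⊔ Ideal.span {l₀}) ∪ relevantPrimes (J ⊔ Ideal.span {l₀}),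
      l₁ ∉ p) :
    ∃ l₂, ∀ᶠ N in atTop, AdaptedNet I J l₀ l₁ l₂ N := by
  obtain ⟨l₂, hl₂, h₂⟩ := exists_mem_forms_one_forall_notMem
    (finite_relevantPrimes (I ⊔ Ideal.span {l₀} ⊔ Ideal.span {l₁})) fun p hp => hp.2
  have hI₀ := isHomogIdeal_sup_span_singleton hI hl₀
  have hI₁ := isHomogIdeal_sup_span_singleton hI₀ hl₁
  have hJ₀ := isHomogIdeal_sup_span_singleton hJ hl₀
  have hreg₁ := eventually_mem_of_mul_mem fun p hp => h p (Or.inl hp)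
  have hreg₁' := eventually_mem_of_mul_mem fun p hp => h p (Or.inr hp)
  have hdeg : ∀ᶠ i : ℕ in atTop,
      (finrank ℂ (degQ (I ⊔ Ideal.span {l₀} ⊔ Ideal.span {l₁}) i) : ℤ) = s := by
    filter_upwards [eventually_finrank_degQ_sup hI₀ hl₁ hreg₁ (p := fun t => s * t + (1 - π))
      (eventually_finrank_degQ_sup_of_surfInv hI hl₀ hregI hS)] with i hi
    rw [hi]
    ring
  have hgen := eventually_mem_sup_of_finrank_degQ_eq hI₁ hl₂ (eventually_mem_of_mul_mem h₂) hdeg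
  have hgen' := eventually_mem_sup_of_finrank_degQ_eq hJ₀ hl₁ hreg₁'
    (eventually_finrank_degQ_sup_of_curveInv hJ hl₀ hregJ hC)
  refine ⟨l₂, ?_⟩
  filter_upwards [eventually_gt_atTop 0, eventually_forall_ge_atTop.2 hreg₁,
    eventually_forall_ge_atTop.2 hreg₁', eventually_forall_ge_atTop.2 hgen,
    eventually_forall_ge_atTop.2 hgen'] with N hN h₁ h₁' h₂ h₂'
  exact ⟨hN, hl₀, hl₁, hl₂, h₁, h₁', h₂, h₂'⟩

namespace AdaptedNet

theorem exists_eq_add (h : AdaptedNet I J l₀ l₁ l₂ N) (hI : IsHomogIdeal I) (hi : N ≤ i + 1)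
    (hf : f ∈ forms n (i + 1)) : ∃ t ∈ idealForms I (i + 1), ∃ a ∈ forms n i, ∃ b ∈ forms n i,
      ∃ c ∈ forms n i, f = t + l₀ * a + l₁ * b + l₂ * c := by
  have hI₀ := isHomogIdeal_sup_span_singleton hI h.mem₀
  have hI₁ := isHomogIdeal_sup_span_singleton hI₀ h.mem₁
  obtain ⟨f₁, hf₁, c, hc, rfl⟩ :=
    exists_eq_add_mul_of_mem_sup hI₁ h.mem₂ hf (h.mem_sup_left (i + 1) hi f hf)
  obtain ⟨f₀, hf₀, b, hb, rfl⟩ := exists_eq_add_mul_of_mem_sup hI₀ h.mem₁ hf₁.2 hf₁.1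
  obtain ⟨t, ht, a, ha, rfl⟩ := exists_eq_add_mul_of_mem_sup hI h.mem₀ hf₀.2 hf₀.1
  exact ⟨t, ht, a, ha, b, hb, c, hc, rfl⟩

theorem exists_eq_add_curve (h : AdaptedNet I J l₀ l₁ l₂ N) (hJ : IsHomogIdeal J) (hi : N ≤ i + 1)
    (hf : f ∈ forms n (i + 1)) :
    ∃ t ∈ idealForms J (i + 1), ∃ a ∈ forms n i, ∃ b ∈ forms n i, f = t + l₀ * a + l₁ * b := by
  obtain ⟨f₀, hf₀, b, hb, rfl⟩ :=
    exists_eq_add_mul_of_mem_sup (isHomogIdeal_sup_span_singleton hJ h.mem₀) h.mem₁ hf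
      (h.mem_sup_right (i + 1) hi f hf)
  obtain ⟨t, ht, a, ha, rfl⟩ := exists_eq_add_mul_of_mem_sup hJ h.mem₀ hf₀.2 hf₀.1
  exact ⟨t, ht, a, ha, b, hb, rfl⟩

/-- As in Castelnuovo–Mumford regularity, the coefficient of `l₂` is first reduced modulo `J` to a
combination of `l₀` and `l₁`; the other coefficients are then corrected since `l₀, l₁` is a regular
sequence modulo `J`. -/
theorem exists_eq_add_of_mem (h : AdaptedNet I J l₀ l₁ l₂ N) (hI : IsHomogIdeal I)
    (hJ : IsHomogIdeal J) (hIJ : I ≤ J) (hreg : ∀ f, l₀ * f ∈ J → f ∈ J) (hi : N ≤ i)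
    (hf : f ∈ idealForms J (i + 1)) :
    ∃ t ∈ idealForms I (i + 1), ∃ a ∈ idealForms J i, ∃ b ∈ idealForms J i,
      ∃ c ∈ idealForms J i, f = t + l₀ * a + l₁ * b + l₂ * c := by
  obtain ⟨t, ht, a, ha, b, hb, c, hc, rfl⟩ := h.exists_eq_add hI (hi.trans i.le_succ) hf.2
  obtain ⟨j, rfl⟩ := Nat.exists_eq_add_one_of_ne_zero (h.pos.trans_le hi).ne'
  obtain ⟨w, hw, a₁, ha₁, b₁, hb₁, rfl⟩ := h.exists_eq_add_curve hJ hi hc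
  have ha' : a + l₂ * a₁ ∈ forms n (j + 1) := add_mem ha (mul_mem_forms_succ h.mem₂ ha₁)
  have hb' : b + l₂ * b₁ ∈ forms n (j + 1) := add_mem hb (mul_mem_forms_succ h.mem₂ hb₁)
  have hmul : l₁ * (b + l₂ * b₁) ∈ J ⊔ Ideal.span {l₀} := by
    refine Submodule.mem_sup.2 ⟨_, sub_mem (sub_mem hf.1 (hIJ ht.1)) (J.mul_mem_left l₂ hw.1),
      l₀ * -(a + l₂ * a₁), Ideal.mem_span_singleton.2 (dvd_mul_right _ _), ?_⟩
    ring
  obtain ⟨u, hu, v, hv, huv⟩ := exists_eq_add_mul_of_mem_sup hJ h.mem₀ hb'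
    (h.mem_of_mul_mem_right (j + 1) hi _ hb' hmul)
  have heq : t + l₀ * a + l₁ * b + l₂ * (w + l₀ * a₁ + l₁ * b₁) =
      t + l₀ * (a + l₂ * a₁ + l₁ * v) + l₁ * u + l₂ * w := by
    linear_combination l₁ * huv
  have hmem : a + l₂ * a₁ + l₁ * v ∈ J := by
    refine hreg _ ?_
    rw [heq] at hf
    have h₁ := (J.add_mem_iff_left (J.mul_mem_left l₂ hw.1)).1 hf.1
    have h₂ := (J.add_mem_iff_left (J.mul_mem_left l₁ hu.1)).1 h₁
    exact (J.add_mem_iff_right (hIJ ht.1)).1 h₂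
  exact ⟨t, ht, _, ⟨hmem, add_mem ha' (mul_mem_forms_succ h.mem₁ hv)⟩, u, hu, w, hw, heq⟩

end AdaptedNet

end AdaptedNet

section Gstar

open MvPolynomial Filter IntermediateField

variable {n N : ℕ} {l₀ l₁ l₂ : MPoly n} {I J : Ideal (MPoly n)} {s π pa d g : ℤ}
  {F : Type*} [Field F] [Algebra ℂ F] {ev : MPoly n →ₐ[ℂ] F}

theorem eventually_two_mul_finrank_degQ_of_surfInv (h : SurfInv I s π pa) :
    ∀ᶠ i : ℕ in atTop,
      2 * (finrank ℂ (degQ I i) : ℤ) = s * (i * (i + 1)) + 2 * (1 - π) * i + 2 * (1 + pa) := by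
  filter_upwards [eventually_finrank_degQ_of_surfInv h] with i hi
  rw [hi]
  linear_combination s * Int.mul_ediv_cancel' (Int.even_mul_succ_self (i : ℤ)).two_dvd

namespace AdaptedNet

theorem surfaceFiltration_top (hnet : AdaptedNet I J l₀ l₁ l₂ N) (h : Dehomogenization I l₀ ev)
    (hI : IsHomogIdeal I) (hS : ∀ i : ℕ, N ≤ i →
      2 * (finrank ℂ (degQ I i) : ℤ) = s * (i * (i + 1)) + 2 * (1 - π) * i + 2 * (1 + pa)) :
    SurfaceFiltration (ev l₁) (ev l₂) N s (1 - π) (dehom ev ⊤) := by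
  refine h.surfaceFiltration hI le_top hnet.mem₀ hnet.mem₁ hnet.mem₂ (fun _ _ => trivial)
    hnet.mem_of_mul_mem_left (fun i hi f hf => ?_) fun i hi => ?_
  · obtain ⟨t, ht, a, ha, b, hb, c, hc, rfl⟩ := hnet.exists_eq_add hI (hi.trans i.le_succ) hf.2
    exact ⟨t, ht, a, ⟨trivial, ha⟩, b, ⟨trivial, hb⟩, c, ⟨trivial, hc⟩, rfl⟩
  · have e₁ := hS i hi
    have e₂ := hS (i + 1) (by omega)
    rw [h.finrank_dehom_top, h.finrank_dehom_top]
    push_cast at e₂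
    linarith

theorem surfaceFiltration (hnet : AdaptedNet I J l₀ l₁ l₂ N) (h : Dehomogenization I l₀ ev)
    (hI : IsHomogIdeal I) (hJ : IsHomogIdeal J) (hIJ : I ≤ J) (hreg : ∀ f, l₀ * f ∈ J → f ∈ J)
    (hS : ∀ i : ℕ, N ≤ i →
      2 * (finrank ℂ (degQ I i) : ℤ) = s * (i * (i + 1)) + 2 * (1 - π) * i + 2 * (1 + pa))
    (hC : ∀ i : ℕ, N ≤ i → (finrank ℂ (degQ J i) : ℤ) = d * i + 1 - g) :
    SurfaceFiltration (ev l₁) (ev l₂) N s (1 - π - d) (dehom ev J) := by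
  refine h.surfaceFiltration hI hIJ hnet.mem₀ hnet.mem₁ hnet.mem₂ hreg
    hnet.mem_of_mul_mem_left (fun i hi f hf => hnet.exists_eq_add_of_mem hI hJ hIJ hreg hi hf)
    fun i hi => ?_
  have e₁ := hS i hi
  have e₂ := hS (i + 1) (by omega)
  have e₃ := hC i hi
  have e₄ := hC (i + 1) (by omega)
  rw [← h.finrank_dehom_add_finrank_degQ hIJ] at e₁ e₂
  push_cast at e₁ e₂ e₄
  linarith

theorem genus_le_Gstar [IsIntegrallyClosedIn ℂ⟮ev l₁⟯ F] (hnet : AdaptedNet I J l₀ l₁ l₂ N)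
    (h : Dehomogenization I l₀ ev) (hI : IsHomogIdeal I) (hJ : IsHomogIdeal J) (hIJ : I ≤ J)
    (hreg : ∀ f, l₀ * f ∈ J → f ∈ J)
    (hS : ∀ i : ℕ, N ≤ i →
      2 * (finrank ℂ (degQ I i) : ℤ) = s * (i * (i + 1)) + 2 * (1 - π) * i + 2 * (1 + pa))
    (hC : ∀ i : ℕ, N ≤ i → (finrank ℂ (degQ J i) : ℤ) = d * i + 1 - g)
    {r : ℤ} (hr : (finrank ℂ (degQ I 1) : ℤ) = r + 1) (hs : 0 < s) (hd : 0 < d)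
    (hsr : s ≤ 2 * r - 4) : g ≤ Gstar r d s π pa := by
  have := isIntegrallyClosedIn_of_isAlgClosed ℂ F
  have hm : (((d - 1) / s).toNat : ℤ) = (d - 1) / s :=
    Int.toNat_of_nonneg (Int.ediv_nonneg (by omega) hs.le)
  have hbound := genus_le_of_filtration (m := ((d - 1) / s).toNat) (ε := (d - 1) % s) (r := r)
    (hnet.surfaceFiltration_top h hI hS) h.ringFiltration
    (hnet.surfaceFiltration h hI hJ hIJ hreg hS hC) (dehom_mul_dehom_le ev ⊤ J)
    (fun i hi => by rw [h.finrank_dehom_top, hS i hi])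
    (fun i hi => by
      rw [h.finrank_dehom_top, ← h.finrank_dehom_add_finrank_degQ hIJ, ← hC i hi, Nat.cast_add,
        add_sub_cancel_right])
    (by rw [hm, Int.mul_ediv_add_emod, sub_add_cancel])
    (Int.emod_nonneg _ hs.ne') (Int.emod_lt_of_pos _ hs) (by rw [h.finrank_dehom_top, hr]) hsr
  rwa [hm] at hbound

end AdaptedNet

/-- A first adapted net `l₀, x, y` provides the pencil `x + c y`: infinitely many of its members
extend to adapted nets, and for one of these `ℂ(l₁ / l₀)` is algebraically closed in `F`. -/
theorem exists_adaptedNet_isIntegrallyClosedIn (hI : IsHomogIdeal I) (hJ : IsHomogIdeal J)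
    (hl₀ : l₀ ∈ forms n 1) (h : Dehomogenization I l₀ ev) (hregI : ∀ f, l₀ * f ∈ I → f ∈ I)
    (hregJ : ∀ f, l₀ * f ∈ J → f ∈ J) (hS : SurfInv I s π pa) (hC : CurveInv J d g)
    (hs : 0 < s) :
    ∃ l₁ l₂, (∀ᶠ N in atTop, AdaptedNet I J l₀ l₁ l₂ N) ∧ IsIntegrallyClosedIn ℂ⟮ev l₁⟯ F := by
  have := isIntegrallyClosedIn_of_isAlgClosed ℂ F
  set T := relevantPrimes (I ⊔ Ideal.span {l₀}) ∪ relevantPrimes (J ⊔ Ideal.span {l₀})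
  have hT : T.Finite := (finite_relevantPrimes _).union (finite_relevantPrimes _)
  have exists_net {l : MPoly n} :=
    exists_eventually_adaptedNet (l₁ := l) hI hJ hl₀ hregI hregJ hS hC
  obtain ⟨x, hx, hxT⟩ :=
    exists_mem_forms_one_forall_notMem hT fun p hp => hp.elim And.right And.right
  obtain ⟨y, hy⟩ := exists_net hx hxT
  obtain ⟨N, hN, hSN⟩ := (hy.and
    (eventually_forall_ge_atTop.2 (eventually_two_mul_finrank_degQ_of_surfInv hS))).exists
  have hsurf := hN.surfaceFiltration_top h hI hSN
  obtain ⟨c, hc, hclosed⟩ := hsurf.exists_isIntegrallyClosedIn_adjoin_simple h.ringFiltration hs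
    (infinite_setOf_forall_add_smul_notMem hT hxT y)
  obtain ⟨l₂, hl₂⟩ := exists_net (add_mem hx ((forms n 1).smul_mem c hN.mem₂)) hc
  refine ⟨x + c • y, l₂, hl₂, ?_⟩
  rwa [map_add, map_smul, Algebra.smul_def]

theorem finrank_degQ_one (h : Nondeg I) : finrank ℂ (degQ I 1) = n := by
  have hbot : idealForms I 1 = ⊥ := eq_bot_iff.2 fun f hf => h f hf.2 hf.1
  have hsum := finrank_degQ_add_finrank_idealForms I 1
  rwa [hbot, finrank_bot, add_zero, finrank_forms_one] at hsum

theorem pos_of_pow_div_le {r : ℕ} (hr : 3 ≤ r) (hs : 0 < s)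
    (hd : (s : ℚ) ^ 4 / (2 * ((r : ℚ) - 2)) ≤ d) : 0 < d := by
  have hs' : (0 : ℚ) < s := by exact_mod_cast hs
  have hr' : (3 : ℚ) ≤ r := by exact_mod_cast hr
  have hpos : (0 : ℚ) < 2 * (r - 2) := by linarith
  exact_mod_cast (div_pos (pow_pos hs' 4) hpos).trans_le hd

end Gstar

end GenusBound

open GenusBound Module MvPolynomial Filter in
theorem statement_18_general {r : ℕ} {d s π pa g : ℤ} (hs : 0 < s) (hd : 0 < d)
    (hsr : s ≤ 2 * (r : ℤ) - 4) {IS IC : Ideal (MPoly (r + 1))} [IS.IsPrime] [IC.IsPrime]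
    (hIS : IsHomogIdeal IS) (hIC : IsHomogIdeal IC) (hS : SurfInv IS s π pa)
    (hC : CurveInv IC d g) (hnd : Nondeg IC) (hle : IS ≤ IC) : g ≤ Gstar r d s π pa := by
  have hX : (X 0 : MPoly (r + 1)) ∈ forms (r + 1) 1 := isHomogeneous_X ℂ 0
  have hXC : X 0 ∉ IC := fun h => X_ne_zero 0 (hnd _ hX h)
  have hXS : X 0 ∉ IS := fun h => hXC (hle h)
  have hregS (f) (hf : X 0 * f ∈ IS) : f ∈ IS := (‹IS.IsPrime›.mem_or_mem hf).resolve_left hXS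
  have hregC (f) (hf : X 0 * f ∈ IC) : f ∈ IC := (‹IC.IsPrime›.mem_or_mem hf).resolve_left hXC
  obtain ⟨F, _, _, ev, hev⟩ := exists_dehomogenization hX hXS
  obtain ⟨l₁, l₂, hnet, _⟩ :=
    exists_adaptedNet_isIntegrallyClosedIn hIS hIC hX hev hregS hregC hS hC hs
  obtain ⟨N, hN, hSN, hCN⟩ := (hnet.and <| .and
    (eventually_forall_ge_atTop.2 (eventually_two_mul_finrank_degQ_of_surfInv hS))
    (eventually_forall_ge_atTop.2 (eventually_finrank_degQ_of_curveInv hC))).exists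
  have hr : (finrank ℂ (degQ IS 1) : ℤ) = r + 1 := by
    rw [finrank_degQ_one fun f hf h => hnd f hf (hle h), Nat.cast_succ]
  exact hN.genus_le_Gstar hev hIS hIC hle hregC hSN hCN hr hs hd hsr

/-- Corollary 3.10.  Let `S ⊆ ℙ^r` be an integral nondegenerate surface of
degree `s` with `2 ≤ r-1 ≤ s ≤ 2r-4`, sectional genus `π` and arithmetic genus `p_a(S)`, and
let `C ⊆ S` be an integral nondegenerate curve of degree `d ≥ s⁴/(2(r-2))`.  Then
`p_a(C) ≤ G*(r,d,s,π,p_a(S))`. -/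
theorem statement_18 (r : ℕ) (d s π pa g : ℤ) (hr : 3 ≤ r)
    (hs1 : (r : ℤ) - 1 ≤ s) (hs2 : s ≤ 2 * (r : ℤ) - 4)
    (IS IC : Ideal (MPoly (r + 1)))
    (hsurf : IsSurface IS) (hsnd : Nondeg IS) (hsinv : SurfInv IS s π pa)
    (hcurve : IsCurve IC) (hcnd : Nondeg IC) (hcinv : CurveInv IC d g)
    (hsub : IS ≤ IC)
    (hd : (s : ℚ) ^ 4 / (2 * ((r : ℚ) - 2)) ≤ (d : ℚ)) :
    g ≤ Gstar (r : ℤ) d s π pa := by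
  have hs : 0 < s := by omega
  have := hsurf.2.1
  have := hcurve.2.1
  exact statement_18_general hs (GenusBound.pos_of_pow_div_le hr hs hd) hs2 hsurf.1 hcurve.1 hsinv
    hcinv hcnd hsub
end

section
/- Let r, s, π, ε be integers with s ≥ 1 and 0 ≤ ε ≤ s−1, set π₀ := s−r+1, and let k, d, μ, m be integers with k−1 = μs+ε and d−1 = ms+ε. Set a := −(k+s−1−ε)/s (so a = −(μ+1), an integer). Then binom(m,2)·s + m(ε+π) + π − (1/2)·a²·s + a·(π+ε−s/2) + G*(r,k,s,π, −binom(π₀−π+1, 2)) − (1−k) = G*(r,d,s,π, −binom(π₀−π+1, 2)). -/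
open scoped BigOperators

/-!
Raising the degree from `d` to `d + s` keeps the remainder of `d - 1` modulo `s` and adds
`d - 1 + π` to `G*`. So, within a residue class, `G*` is `binom(m,2)s + m(ε+π)` up to a constant.
At `a = -(μ+1)` the adjunction terms `-a²s/2 + a(π+ε-s/2)` are minus the value of this expression
at `μ + 1`, which belongs to degree `k + s`, while `G*` in degree `k + s` is `G*` in degree `k`
plus `π - (1-k)`; hence only the difference of `G*` between the degrees `k + s` and `d` remains.
-/

lemma binom2_cast {K : Type*} [DivisionRing K] [NeZero (2 : K)] (z : ℤ) :
    (binom2 z : K) = z * (z - 1) / 2 := by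
  have two_dvd : (2 : ℤ) ∣ z * (z - 1) := (Int.even_mul_pred_self z).two_dvd
  rw [binom2, Int.cast_div two_dvd (by exact_mod_cast two_ne_zero (α := K))]
  push_cast
  rfl

lemma binom2_add (a b : ℤ) : binom2 (a + b) = binom2 a + binom2 b + a * b := by
  qify
  simp only [binom2_cast]
  push_cast
  ring

lemma binom2_add_one (z : ℤ) : binom2 (z + 1) = binom2 z + z := by
  have binom2_one : binom2 1 = 0 := rfl
  rw [binom2_add, binom2_one, add_zero, mul_one]

section Gstar

variable (r π p : ℤ) {s : ℤ}

lemma Gstar_add_mul_self (hs : s ≠ 0) (d n : ℤ) :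
    Gstar r (d + n * s) s π p = Gstar r d s π p + (binom2 n * s + n * (d - 1 + π)) := by
  have shift : d + n * s - 1 = d - 1 + n * s := by ring
  have quotient : (d + n * s - 1) / s = (d - 1) / s + n := by
    rw [shift, Int.add_mul_ediv_right _ _ hs]
  have remainder : (d + n * s - 1) % s = (d - 1) % s := by
    rw [shift, Int.add_mul_emod_self_right]
  rw [Gstar, Gstar, quotient, remainder, binom2_add]
  linear_combination n * Int.mul_ediv_add_emod (d - 1) s

lemma Gstar_sub_Gstar {k d ε μ m : ℤ} (hs : s ≠ 0)
    (hk : k - 1 = μ * s + ε) (hd : d - 1 = m * s + ε) :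
    Gstar r d s π p - Gstar r k s π p =
      (binom2 m * s + m * (ε + π)) - (binom2 μ * s + μ * (ε + π)) := by
  obtain ⟨n, rfl⟩ : ∃ n, m = μ + n := ⟨m - μ, by ring⟩
  obtain rfl : d = k + n * s := by linear_combination hd - hk
  rw [Gstar_add_mul_self r π p hs, binom2_add]
  linear_combination n * hk

end Gstar

theorem statement_19_general (r s π ε k d μ m p : ℤ) (hs : s ≠ 0)
    (hk : k - 1 = μ * s + ε) (hd : d - 1 = m * s + ε) :
    -(((k : ℚ) + s - 1 - ε) / s) = -((μ : ℚ) + 1) ∧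
    ((binom2 m * s + m * (ε + π) + π : ℤ) : ℚ)
        - (1 / 2) * (-(((k : ℚ) + s - 1 - ε) / s)) ^ 2 * s
        + (-(((k : ℚ) + s - 1 - ε) / s)) * ((π : ℚ) + ε - (s : ℚ) / 2)
        + (Gstar r k s π p : ℚ)
        - (1 - (k : ℚ))
      = (Gstar r d s π p : ℚ) := by
  have k_eq : (k : ℚ) - 1 = μ * s + ε := mod_cast hk
  have a_eq : -(((k : ℚ) + s - 1 - ε) / s) = -((μ : ℚ) + 1) := by
    rw [neg_inj, div_eq_iff (Int.cast_ne_zero.mpr hs)]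
    linear_combination k_eq
  refine ⟨a_eq, ?_⟩
  have adjunction : -(1 / 2) * (-((μ : ℚ) + 1)) ^ 2 * s + -((μ : ℚ) + 1) * (π + ε - (s : ℚ) / 2)
      = -((binom2 (μ + 1) * s + (μ + 1) * (ε + π) : ℤ) : ℚ) := by
    push_cast [binom2_cast]
    ring
  have genus_sub : Gstar r d s π p - Gstar r k s π p =
      (binom2 m * s + m * (ε + π)) - (binom2 (μ + 1) * s + (μ + 1) * (ε + π)) + π + (k - 1) := by
    rw [Gstar_sub_Gstar r π p hs hk hd, binom2_add_one]
    linear_combination -hk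
  rw [a_eq]
  qify at genus_sub
  push_cast at adjunction ⊢
  linear_combination adjunction - genus_sub

/-- the genus computation in the proof of Theorem 1.1(c).  With
`k-1 = μs+ε`, `d-1 = ms+ε` and `a := -(k+s-1-ε)/s`, one has `a = -(μ+1)` and
`binom(m,2)s + m(ε+π) + π - a²s/2 + a(π+ε-s/2) + G*(r,k,s,π,-binom(π₀-π+1,2)) - (1-k)
  = G*(r,d,s,π,-binom(π₀-π+1,2))`. -/
theorem statement_19 (r s π ε k d μ m : ℤ) (hs : 1 ≤ s)
    (hε1 : 0 ≤ ε) (hε2 : ε ≤ s - 1)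
    (hk : k - 1 = μ * s + ε) (hd : d - 1 = m * s + ε) :
    -(((k : ℚ) + s - 1 - ε) / s) = -((μ : ℚ) + 1) ∧
    ((binom2 m * s + m * (ε + π) + π : ℤ) : ℚ)
        - (1 / 2) * (-(((k : ℚ) + s - 1 - ε) / s)) ^ 2 * s
        + (-(((k : ℚ) + s - 1 - ε) / s)) * ((π : ℚ) + ε - (s : ℚ) / 2)
        + (Gstar r k s π (-(binom2 (s - r + 1 - π + 1))) : ℚ)
        - (1 - (k : ℚ))
      = (Gstar r d s π (-(binom2 (s - r + 1 - π + 1))) : ℚ) :=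
  statement_19_general r s π ε k d μ m _ (by omega) hk hd
end
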